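/- arXiv:2208.12455 — 11 statements merged into one kernel-verified Lean document; each statement's English description precedes it below -/
import Mathlib

section
/- Assume Hypothesis (H). Then ℓ² divides c²·λ. More precisely, for any two distinct classes Δ, Δ' ∈ C, the number of blocks B ∈ B meeting both Δ and Δ' nontrivially equals c²λ/ℓ². -/
/-! Fix two distinct classes `Δ`, `Δ'` and count the triples `(α, β, B)` with `α ∈ B ∩ Δ` and
`β ∈ B ∩ Δ'`. Since `Δ` and `Δ'` are disjoint, `α ≠ β`, so each of the `c²` pairs `(α, β)` lies in
`λ` blocks; and each block meeting both classes contains exactly `ℓ²` of these pairs. -/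

theorem card_filter_inter_nonempty_mul {Ω : Type*} [DecidableEq Ω]
    (𝓑 : Finset (Finset Ω)) {S T : Finset Ω} {lam m n : ℕ}
    (hpairs : ∀ α ∈ S, ∀ β ∈ T, (𝓑.filter (fun B => α ∈ B ∧ β ∈ B)).card = lam)
    (hS : ∀ B ∈ 𝓑, (B ∩ S).Nonempty → (B ∩ S).card = m)
    (hT : ∀ B ∈ 𝓑, (B ∩ T).Nonempty → (B ∩ T).card = n) :
    (𝓑.filter (fun B => (B ∩ S).Nonempty ∧ (B ∩ T).Nonempty)).card * (m * n) =
      S.card * T.card * lam := by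
  let Joined (p : Ω × Ω) (B : Finset Ω) : Prop := p.1 ∈ B ∧ p.2 ∈ B
  let meeting := 𝓑.filter (fun B => (B ∩ S).Nonempty ∧ (B ∩ T).Nonempty)
  have blocks_through_pair : ∀ p ∈ S ×ˢ T, (meeting.bipartiteAbove Joined p).card = lam := by
    intro p hp
    obtain ⟨hpS, hpT⟩ := Finset.mem_product.mp hp
    rw [← hpairs p.1 hpS p.2 hpT, Finset.bipartiteAbove, Finset.filter_filter]
    refine congrArg Finset.card (Finset.filter_congr fun B _ => and_iff_right_of_imp ?_)
    rintro ⟨hpB, hpB'⟩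
    exact ⟨⟨p.1, Finset.mem_inter.mpr ⟨hpB, hpS⟩⟩, ⟨p.2, Finset.mem_inter.mpr ⟨hpB', hpT⟩⟩⟩
  have pairs_in_block : ∀ B ∈ meeting, ((S ×ˢ T).bipartiteBelow Joined B).card = m * n := by
    intro B hB
    obtain ⟨hB, hBS, hBT⟩ := Finset.mem_filter.mp hB
    rw [← hS B hB hBS, ← hT B hB hBT, ← Finset.card_product, Finset.bipartiteBelow,
      Finset.filter_product, Finset.filter_mem_eq_inter, Finset.filter_mem_eq_inter,
      Finset.inter_comm S, Finset.inter_comm T]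
  rw [← Finset.card_product]
  exact (Finset.card_mul_eq_card_mul Joined blocks_through_pair pairs_in_block).symm

theorem pairwiseDisjoint_of_existsUnique_mem {Ω : Type*} {𝓒 : Finset (Finset Ω)}
    (hpart : ∀ ω : Ω, ∃! Δ, Δ ∈ 𝓒 ∧ ω ∈ Δ) : (𝓒 : Set (Finset Ω)).PairwiseDisjoint id :=
  fun _ hΔ _ hΔ' hne => Finset.disjoint_left.mpr fun ω hω hω' =>
    hne ((hpart ω).unique ⟨hΔ, hω⟩ ⟨hΔ', hω'⟩)

theorem stmt_2_general {Ω : Type*} [DecidableEq Ω] (lam c ℓ : ℕ) (𝓑 𝓒 : Finset (Finset Ω))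
    (hpairs : ∀ α β : Ω, α ≠ β → (𝓑.filter (fun B => α ∈ B ∧ β ∈ B)).card = lam)
    (hdisj : (𝓒 : Set (Finset Ω)).PairwiseDisjoint id)
    (hnontriv : 1 < 𝓒.card)
    (hccard : ∀ Δ ∈ 𝓒, Δ.card = c)
    (hlcap : ∀ B ∈ 𝓑, ∀ Δ ∈ 𝓒, (B ∩ Δ).Nonempty → (B ∩ Δ).card = ℓ) :
    ℓ ^ 2 ∣ c ^ 2 * lam ∧
      ∀ Δ ∈ 𝓒, ∀ Δ' ∈ 𝓒, Δ ≠ Δ' →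
        (𝓑.filter (fun B => (B ∩ Δ).Nonempty ∧ (B ∩ Δ').Nonempty)).card * ℓ ^ 2 = c ^ 2 * lam := by
  have hcount : ∀ Δ ∈ 𝓒, ∀ Δ' ∈ 𝓒, Δ ≠ Δ' →
      (𝓑.filter (fun B => (B ∩ Δ).Nonempty ∧ (B ∩ Δ').Nonempty)).card * ℓ ^ 2 =
        c ^ 2 * lam := by
    intro Δ hΔ Δ' hΔ' hne
    have hcross : ∀ α ∈ Δ, ∀ β ∈ Δ', (𝓑.filter (fun B => α ∈ B ∧ β ∈ B)).card = lam :=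
      fun α hα β hβ => hpairs α β (Finset.disjoint_iff_ne.mp (hdisj hΔ hΔ' hne) α hα β hβ)
    have h := card_filter_inter_nonempty_mul 𝓑 hcross
      (fun B hB => hlcap B hB Δ hΔ) (fun B hB => hlcap B hB Δ' hΔ')
    rwa [hccard Δ hΔ, hccard Δ' hΔ', ← sq, ← sq] at h
  obtain ⟨Δ, hΔ, Δ', hΔ', hne⟩ := Finset.one_lt_card.mp hnontriv
  exact ⟨Dvd.intro_left _ (hcount Δ hΔ Δ' hΔ' hne), hcount⟩

theorem stmt_2
    {Ω : Type*} [Fintype Ω] [DecidableEq Ω]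
    (v k lam c d ℓ : ℕ)
    (𝓑 𝓒 : Finset (Finset Ω))
    (G : Subgroup (Equiv.Perm Ω))
    (hv : Fintype.card Ω = v)
    (hlam1 : 1 ≤ lam)
    (hkcard : ∀ B ∈ 𝓑, B.card = k)
    (hpairs : ∀ α β : Ω, α ≠ β → (𝓑.filter (fun B => α ∈ B ∧ β ∈ B)).card = lam)
    (hk2 : 2 < k) (hkv : k < v)
    (hGB : ∀ g ∈ G, ∀ B ∈ 𝓑, B.image ⇑g ∈ 𝓑)
    (hflag : ∀ B₁ ∈ 𝓑, ∀ B₂ ∈ 𝓑, ∀ α₁ ∈ B₁, ∀ α₂ ∈ B₂,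
        ∃ g ∈ G, B₁.image ⇑g = B₂ ∧ g α₁ = α₂)
    (hpart : ∀ ω : Ω, ∃! Δ, Δ ∈ 𝓒 ∧ ω ∈ Δ)
    (hdcard : 𝓒.card = d) (hd2 : 2 ≤ d)
    (hccard : ∀ Δ ∈ 𝓒, Δ.card = c) (hc2 : 2 ≤ c)
    (hGC : ∀ g ∈ G, ∀ Δ ∈ 𝓒, Δ.image ⇑g ∈ 𝓒)
    (hl2 : 2 ≤ ℓ)
    (hlcap : ∀ B ∈ 𝓑, ∀ Δ ∈ 𝓒, (B ∩ Δ).Nonempty → (B ∩ Δ).card = ℓ)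
    : ℓ ^ 2 ∣ c ^ 2 * lam ∧
      ∀ Δ ∈ 𝓒, ∀ Δ' ∈ 𝓒, Δ ≠ Δ' →
        (𝓑.filter (fun B => (B ∩ Δ).Nonempty ∧ (B ∩ Δ').Nonempty)).card * ℓ ^ 2 = c ^ 2 * lam := by
  exact stmt_2_general lam c ℓ 𝓑 𝓒 hpairs (pairwiseDisjoint_of_existsUnique_mem hpart)
    (hdcard ▸ hd2) hccard hlcap
end

section
/- Assume Hypothesis (H). Then k − 1 − d(ℓ−1) ≥ 1 and ℓ − 1 ≤ (k − 1 − d(ℓ−1))·(ℓ−1) ≤ λ − 1. -/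
/-!
Let `r` be the number of blocks through a point. Counting the pairs `(β, B)` with `β ≠ α` and
`α, β ∈ B`, first over all points `β` and then over the class of `α` only, gives
`r (k - 1) = (v - 1) λ` and `r (ℓ - 1) = (c - 1) λ`. As `v = c d`, eliminating `r` and `λ` leaves
`(c - 1) x = (ℓ - 1) (d - 1)` for `x = k - 1 - d (ℓ - 1)`, so `x` is positive. Hence
`(d - 1) (ℓ - 1) < k`, and `k ≤ r` by Fisher's inequality, so
`(c - 1) x (ℓ - 1) = (ℓ - 1) (d - 1) (ℓ - 1) < (ℓ - 1) r = (c - 1) λ`. Cancel `c - 1`.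
-/

section BlockDesign

open Finset Matrix

theorem card_eq_card_classes_mul {Ω : Type*} [Fintype Ω] {𝓒 : Finset (Finset Ω)} {c : ℕ}
    (hpart : ∀ ω : Ω, ∃! Δ, Δ ∈ 𝓒 ∧ ω ∈ Δ) (hcard : ∀ Δ ∈ 𝓒, #Δ = c) :
    Fintype.card Ω = #𝓒 * c := by
  classical
  have hone : ∀ ω, #{Δ ∈ 𝓒 | ω ∈ Δ} = 1 := fun ω =>
    card_eq_one_iff_existsUnique.2 (by simpa only [mem_filter] using hpart ω)
  rw [← sum_const_nat hcard, sum_card hone, mul_one]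

variable {Ω : Type*} [DecidableEq Ω] {𝓑 : Finset (Finset Ω)} {k lam : ℕ}

theorem card_blocks_through_mul_pred {S : Finset Ω} {α : Ω} {m : ℕ} (hα : α ∈ S)
    (hpairs : ∀ β ∈ S, α ≠ β → #{B ∈ 𝓑 | α ∈ B ∧ β ∈ B} = lam)
    (hinter : ∀ B ∈ 𝓑, α ∈ B → #(B ∩ S) = m) :
    #{B ∈ 𝓑 | α ∈ B} * (m - 1) = (#S - 1) * lam := by
  have hpoint : ∀ β ∈ S.erase α, #{B ∈ {B ∈ 𝓑 | α ∈ B} | β ∈ B} = lam := fun β hβ => by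
    rw [filter_filter, hpairs β (mem_of_mem_erase hβ) (ne_of_mem_erase hβ).symm]
  have hblock : ∀ B ∈ ({B ∈ 𝓑 | α ∈ B} : Finset _), #(S.erase α ∩ B) = m - 1 := fun B hB => by
    obtain ⟨hB𝓑, hαB⟩ := mem_filter.1 hB
    rw [erase_inter, card_erase_of_mem (mem_inter.2 ⟨hα, hαB⟩), inter_comm, hinter B hB𝓑 hαB]
  rw [← card_erase_of_mem hα, ← sum_card_inter hpoint, sum_const_nat hblock]

/-- The point-block incidence matrix, with rows indexed by points and columns by blocks. Its Gram
matrix records the numbers of blocks through pairs of points. -/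
def blockIncMatrix (𝓑 : Finset (Finset Ω)) : Matrix Ω 𝓑 ℚ :=
  of fun α B => if α ∈ B.1 then 1 else 0

theorem blockIncMatrix_mul_transpose_apply (α β : Ω) :
    (blockIncMatrix 𝓑 * (blockIncMatrix 𝓑)ᵀ) α β = #{B ∈ 𝓑 | α ∈ B ∧ β ∈ B} := by
  simp only [blockIncMatrix, mul_apply, transpose_apply, of_apply, ite_zero_mul_ite_zero, mul_one]
  rw [sum_coe_sort 𝓑 fun B => if α ∈ B ∧ β ∈ B then (1 : ℚ) else 0, sum_boole]

theorem blockIncMatrix_mul_transpose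
    (hpairs : ∀ α β : Ω, α ≠ β → #{B ∈ 𝓑 | α ∈ B ∧ β ∈ B} = lam) :
    blockIncMatrix 𝓑 * (blockIncMatrix 𝓑)ᵀ =
      diagonal (fun α => (#{B ∈ 𝓑 | α ∈ B} - lam : ℚ)) + (lam : ℚ) • vecMulVec 1 (star 1) := by
  ext α β
  rw [blockIncMatrix_mul_transpose_apply]
  obtain rfl | hne := eq_or_ne α β
  · simp
  · simp [hne, hpairs α β hne]

theorem posDef_blockIncMatrix_mul_transpose [Finite Ω]
    (hpairs : ∀ α β : Ω, α ≠ β → #{B ∈ 𝓑 | α ∈ B ∧ β ∈ B} = lam)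
    (hlt : ∀ α, lam < #{B ∈ 𝓑 | α ∈ B}) :
    (blockIncMatrix 𝓑 * (blockIncMatrix 𝓑)ᵀ).PosDef := by
  rw [blockIncMatrix_mul_transpose hpairs]
  refine PosDef.add_posSemidef (.diagonal fun α => ?_)
    ((posSemidef_vecMulVec_self_star 1).smul (Nat.cast_nonneg lam))
  exact sub_pos.2 (Nat.cast_lt.2 (hlt α))

/-- `𝓑` is the block set of a 2-`(v, k, λ)` design with point set `Ω`, where `v` is the cardinality
of `Ω`. Blocks are sets of points, so there are no repeated blocks; degenerate parameters are
allowed. -/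
structure IsTwoDesign (𝓑 : Finset (Finset Ω)) (k lam : ℕ) : Prop where
  card_block : ∀ B ∈ 𝓑, #B = k
  card_blocks_through_pair : ∀ α β : Ω, α ≠ β → #{B ∈ 𝓑 | α ∈ B ∧ β ∈ B} = lam

namespace IsTwoDesign

theorem card_blocks_through_mul [Fintype Ω] (h : IsTwoDesign 𝓑 k lam) (α : Ω) :
    #{B ∈ 𝓑 | α ∈ B} * (k - 1) = (Fintype.card Ω - 1) * lam :=
  card_blocks_through_mul_pred (mem_univ α) (fun β _ => h.card_blocks_through_pair α β)
    fun B hB _ => by rw [inter_univ, h.card_block B hB]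

theorem one_lt_card_block [Nontrivial Ω] (h : IsTwoDesign 𝓑 k lam) (hlam : 0 < lam) : 1 < k := by
  obtain ⟨α, β, hne⟩ := exists_pair_ne Ω
  rw [← h.card_blocks_through_pair α β hne] at hlam
  obtain ⟨B, hB⟩ := card_pos.1 hlam
  obtain ⟨hB𝓑, hαB, hβB⟩ := mem_filter.1 hB
  rw [← h.card_block B hB𝓑]
  exact one_lt_card.2 ⟨α, hαB, β, hβB, hne⟩

theorem card_blocks_through_eq [Finite Ω] [Nontrivial Ω] (h : IsTwoDesign 𝓑 k lam) (hlam : 0 < lam)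
    (α β : Ω) : #{B ∈ 𝓑 | α ∈ B} = #{B ∈ 𝓑 | β ∈ B} := by
  cases nonempty_fintype Ω
  exact Nat.eq_of_mul_eq_mul_right (Nat.sub_pos_of_lt (h.one_lt_card_block hlam))
    ((h.card_blocks_through_mul α).trans (h.card_blocks_through_mul β).symm)

end IsTwoDesign

variable [Fintype Ω]

/-- Fisher's inequality. -/
theorem card_points_le_card_blocks
    (hpairs : ∀ α β : Ω, α ≠ β → #{B ∈ 𝓑 | α ∈ B ∧ β ∈ B} = lam)
    (hlt : ∀ α, lam < #{B ∈ 𝓑 | α ∈ B}) : Fintype.card Ω ≤ #𝓑 :=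
  calc Fintype.card Ω = (blockIncMatrix 𝓑 * (blockIncMatrix 𝓑)ᵀ).rank :=
        (rank_of_isUnit _ (posDef_blockIncMatrix_mul_transpose hpairs hlt).isUnit).symm
    _ ≤ (blockIncMatrix 𝓑).rank := rank_mul_le_left _ _
    _ ≤ Fintype.card 𝓑 := rank_le_card_width _
    _ = #𝓑 := Fintype.card_coe 𝓑

namespace IsTwoDesign

variable {S : Finset Ω} {α : Ω} {d m : ℕ}

theorem card_pred_mul_card_block_pred (h : IsTwoDesign 𝓑 k lam) (hlam : 0 < lam)
    (hα : α ∈ S) (hinter : ∀ B ∈ 𝓑, α ∈ B → #(B ∩ S) = m) :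
    (#S - 1) * (k - 1) = (m - 1) * (Fintype.card Ω - 1) := by
  have hS := card_blocks_through_mul_pred hα (fun β _ => h.card_blocks_through_pair α β) hinter
  refine Nat.eq_of_mul_eq_mul_right hlam ?_
  calc (#S - 1) * (k - 1) * lam = (#S - 1) * lam * (k - 1) := by ring
    _ = (m - 1) * (#{B ∈ 𝓑 | α ∈ B} * (k - 1)) := by rw [← hS]; ring
    _ = (m - 1) * (Fintype.card Ω - 1) * lam := by rw [h.card_blocks_through_mul α, mul_assoc]

theorem card_pred_mul_sub (h : IsTwoDesign 𝓑 k lam) (hlam : 0 < lam)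
    (hα : α ∈ S) (hinter : ∀ B ∈ 𝓑, α ∈ B → #(B ∩ S) = m)
    (hv : Fintype.card Ω = d * #S) :
    (#S - 1) * (k - 1 - d * (m - 1)) = (m - 1) * (d - 1) := by
  have hS : 0 < #S := card_pos.2 ⟨α, hα⟩
  have hd : 0 < d := Nat.pos_of_mul_pos_right (hv ▸ Fintype.card_pos_iff.2 ⟨α⟩)
  have hsplit : d * #S - 1 = d * (#S - 1) + (d - 1) := by
    have : d ≤ d * #S := Nat.le_mul_of_pos_right d hS
    rw [Nat.mul_sub_one]
    omega
  rw [Nat.mul_sub, h.card_pred_mul_card_block_pred hlam hα hinter, hv, hsplit]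
  exact Nat.sub_eq_of_eq_add (by ring)

theorem mul_pred_lt_card_block_pred (h : IsTwoDesign 𝓑 k lam) (hlam : 0 < lam)
    (hα : α ∈ S) (hinter : ∀ B ∈ 𝓑, α ∈ B → #(B ∩ S) = m)
    (hv : Fintype.card Ω = d * #S) (hd : 1 < d) (hm : 1 < m) : d * (m - 1) < k - 1 := by
  have hpos : 0 < (#S - 1) * (k - 1 - d * (m - 1)) := by
    rw [h.card_pred_mul_sub hlam hα hinter hv]
    exact Nat.mul_pos (Nat.sub_pos_of_lt hm) (Nat.sub_pos_of_lt hd)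
  exact Nat.lt_of_sub_pos (Nat.pos_of_mul_pos_left hpos)

variable [Nontrivial Ω]

theorem lt_card_blocks_through (h : IsTwoDesign 𝓑 k lam) (hlam : 0 < lam)
    (hk : k < Fintype.card Ω) (α : Ω) : lam < #{B ∈ 𝓑 | α ∈ B} := by
  have hk1 := h.one_lt_card_block hlam
  refine lt_of_mul_lt_mul_right (a := k - 1) ?_ (Nat.zero_le _)
  calc lam * (k - 1) < lam * (Fintype.card Ω - 1) :=
        Nat.mul_lt_mul_of_pos_left (by omega) hlam
    _ = #{B ∈ 𝓑 | α ∈ B} * (k - 1) := by rw [h.card_blocks_through_mul α, mul_comm]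

theorem card_block_le_card_blocks_through (h : IsTwoDesign 𝓑 k lam) (hlam : 0 < lam)
    (hk : k < Fintype.card Ω) (α : Ω) : k ≤ #{B ∈ 𝓑 | α ∈ B} := by
  refine le_of_mul_le_mul_left (a := Fintype.card Ω) ?_ Fintype.card_pos
  calc Fintype.card Ω * k ≤ #𝓑 * k := Nat.mul_le_mul_right k <|
        card_points_le_card_blocks h.card_blocks_through_pair (h.lt_card_blocks_through hlam hk)
    _ = ∑ B ∈ 𝓑, #B := (sum_const_nat h.card_block).symm
    _ = Fintype.card Ω * #{B ∈ 𝓑 | α ∈ B} :=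
        sum_card fun β => h.card_blocks_through_eq hlam β α

theorem sub_mul_pred_lt_lam (h : IsTwoDesign 𝓑 k lam) (hlam : 0 < lam) (hk : k < Fintype.card Ω)
    (hα : α ∈ S) (hinter : ∀ B ∈ 𝓑, α ∈ B → #(B ∩ S) = m)
    (hv : Fintype.card Ω = d * #S) (hd : 1 < d) (hm : 1 < m) :
    (k - 1 - d * (m - 1)) * (m - 1) < lam := by
  have hlt : (m - 1) * (d - 1) < #{B ∈ 𝓑 | α ∈ B} :=
    calc (m - 1) * (d - 1) ≤ (m - 1) * d := Nat.mul_le_mul_left _ (Nat.sub_le d 1)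
      _ = d * (m - 1) := mul_comm _ _
      _ < k - 1 := h.mul_pred_lt_card_block_pred hlam hα hinter hv hd hm
      _ ≤ k := Nat.sub_le k 1
      _ ≤ #{B ∈ 𝓑 | α ∈ B} := h.card_block_le_card_blocks_through hlam hk α
  refine lt_of_mul_lt_mul_left (a := #S - 1) ?_ (Nat.zero_le _)
  calc (#S - 1) * ((k - 1 - d * (m - 1)) * (m - 1)) = (m - 1) * (d - 1) * (m - 1) := by
        rw [← mul_assoc, h.card_pred_mul_sub hlam hα hinter hv]
    _ < #{B ∈ 𝓑 | α ∈ B} * (m - 1) := Nat.mul_lt_mul_of_pos_right hlt (Nat.sub_pos_of_lt hm)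
    _ = (#S - 1) * lam :=
        card_blocks_through_mul_pred hα (fun β _ => h.card_blocks_through_pair α β) hinter

end IsTwoDesign

end BlockDesign

open Finset in
theorem stmt_3_general {Ω : Type*} [Fintype Ω] [DecidableEq Ω] {𝓑 𝓒 : Finset (Finset Ω)}
    {k lam c ℓ : ℕ} (h : IsTwoDesign 𝓑 k lam) (hlam : 0 < lam) (hk : k < Fintype.card Ω)
    (hpart : ∀ ω : Ω, ∃! Δ, Δ ∈ 𝓒 ∧ ω ∈ Δ) (hd : 2 ≤ #𝓒) (hc : ∀ Δ ∈ 𝓒, #Δ = c) (hℓ : 2 ≤ ℓ)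
    (hinter : ∀ B ∈ 𝓑, ∀ Δ ∈ 𝓒, (B ∩ Δ).Nonempty → #(B ∩ Δ) = ℓ) :
    1 ≤ k - 1 - #𝓒 * (ℓ - 1) ∧
      ℓ - 1 ≤ (k - 1 - #𝓒 * (ℓ - 1)) * (ℓ - 1) ∧
      (k - 1 - #𝓒 * (ℓ - 1)) * (ℓ - 1) ≤ lam - 1 := by
  have hv := card_eq_card_classes_mul hpart hc
  have hc0 : 0 < c := Nat.pos_of_mul_pos_left (hv ▸ hk.pos)
  have : Nontrivial Ω :=
    Fintype.one_lt_card_iff_nontrivial.1 (hv ▸ Nat.mul_le_mul hd hc0)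
  obtain ⟨α⟩ : Nonempty Ω := inferInstance
  obtain ⟨Δ, ⟨hΔ, hα⟩, -⟩ := hpart α
  obtain rfl := hc Δ hΔ
  have hcap : ∀ B ∈ 𝓑, α ∈ B → #(B ∩ Δ) = ℓ := fun B hB hαB =>
    hinter B hB Δ hΔ ⟨α, mem_inter.2 ⟨hαB, hα⟩⟩
  have hpos : 0 < k - 1 - #𝓒 * (ℓ - 1) :=
    Nat.sub_pos_of_lt (h.mul_pred_lt_card_block_pred hlam hα hcap hv hd hℓ)
  exact ⟨hpos, Nat.le_mul_of_pos_left _ hpos,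
    Nat.le_sub_one_of_lt (h.sub_mul_pred_lt_lam hlam hk hα hcap hv hd hℓ)⟩

theorem stmt_3
    {Ω : Type*} [Fintype Ω] [DecidableEq Ω]
    (v k lam c d ℓ : ℕ)
    (𝓑 𝓒 : Finset (Finset Ω))
    (G : Subgroup (Equiv.Perm Ω))
    (hv : Fintype.card Ω = v)
    (hlam1 : 1 ≤ lam)
    (hkcard : ∀ B ∈ 𝓑, B.card = k)
    (hpairs : ∀ α β : Ω, α ≠ β → (𝓑.filter (fun B => α ∈ B ∧ β ∈ B)).card = lam)
    (hk2 : 2 < k) (hkv : k < v)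
    (hGB : ∀ g ∈ G, ∀ B ∈ 𝓑, B.image ⇑g ∈ 𝓑)
    (hflag : ∀ B₁ ∈ 𝓑, ∀ B₂ ∈ 𝓑, ∀ α₁ ∈ B₁, ∀ α₂ ∈ B₂,
        ∃ g ∈ G, B₁.image ⇑g = B₂ ∧ g α₁ = α₂)
    (hpart : ∀ ω : Ω, ∃! Δ, Δ ∈ 𝓒 ∧ ω ∈ Δ)
    (hdcard : 𝓒.card = d) (hd2 : 2 ≤ d)
    (hccard : ∀ Δ ∈ 𝓒, Δ.card = c) (hc2 : 2 ≤ c)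
    (hGC : ∀ g ∈ G, ∀ Δ ∈ 𝓒, Δ.image ⇑g ∈ 𝓒)
    (hl2 : 2 ≤ ℓ)
    (hlcap : ∀ B ∈ 𝓑, ∀ Δ ∈ 𝓒, (B ∩ Δ).Nonempty → (B ∩ Δ).card = ℓ)
    : 1 ≤ k - 1 - d * (ℓ - 1) ∧
      ℓ - 1 ≤ (k - 1 - d * (ℓ - 1)) * (ℓ - 1) ∧
      (k - 1 - d * (ℓ - 1)) * (ℓ - 1) ≤ lam - 1 := by
  subst hv hdcard
  exact stmt_3_general ⟨hkcard, hpairs⟩ hlam1 hkv hpart hd2 hccard hl2 hlcap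
end

section
/- Assume Hypothesis (H). Then k divides λ·ℓ·(ℓ−1)²·d·(d−1). -/
/-!
Count the blocks through a point `α` by their intersections with a set `S ∋ α` that meets all of
them in the same number of points. Comparing `S = Ω` with `S` the class of `α`, and summing over
the classes, gives `(v - d)(k - 1) = d(ℓ - 1)(v - 1)`. With `x = k - 1 - d(ℓ - 1)` this says both
`v x = d(k - ℓ)` and `(v - 1)x = (d - 1)(k - 1)`. Since `k` divides `b k (k - 1) = λ v (v - 1)`, it
divides `x² λ v (v - 1) = λ d (d - 1)(k - ℓ)(k - 1)`, which is congruent to `λ ℓ d (d - 1)` mod `k`.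
-/

section

open Finset

variable {Ω : Type*} [DecidableEq Ω] {𝓑 : Finset (Finset Ω)} {k lam ℓ : ℕ}

/-- The balance condition of a pairwise balanced design with block set `𝓑` and index `lam`: any two
distinct points lie together in exactly `lam` blocks. The blocks may have different sizes. -/
def IsPairwiseBalanced (𝓑 : Finset (Finset Ω)) (lam : ℕ) : Prop :=
  ∀ α β : Ω, α ≠ β → #{B ∈ 𝓑 | α ∈ B ∧ β ∈ B} = lam

theorem sum_card_blocks_through [Fintype Ω] (𝓑 : Finset (Finset Ω)) :
    ∑ α, #{B ∈ 𝓑 | α ∈ B} = ∑ B ∈ 𝓑, #B := by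
  simpa only [bipartiteAbove, bipartiteBelow, filter_univ_mem] using
    sum_card_bipartiteAbove_eq_sum_card_bipartiteBelow (s := univ) (t := 𝓑) fun α B => α ∈ B

namespace IsPairwiseBalanced

theorem sum_card_inter_of_notMem (h𝓑 : IsPairwiseBalanced 𝓑 lam) {α : Ω} {T : Finset Ω}
    (hα : α ∉ T) : ∑ B ∈ 𝓑 with α ∈ B, #(T ∩ B) = #T * lam := by
  refine sum_card_inter fun β hβ => ?_
  rw [filter_filter]
  exact h𝓑 α β (ne_of_mem_of_not_mem hβ hα).symm

theorem card_blocks_through_mul (h𝓑 : IsPairwiseBalanced 𝓑 lam) {α : Ω} {S : Finset Ω}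
    (hα : α ∈ S) {m : ℕ} (hm : ∀ B ∈ 𝓑, α ∈ B → #(B ∩ S) = m) :
    (#{B ∈ 𝓑 | α ∈ B} : ℤ) * (m - 1) = lam * (#S - 1) := by
  have hinter : ∀ B ∈ 𝓑.filter (α ∈ ·), (#(S.erase α ∩ B) : ℤ) = m - 1 := by
    intro B hB
    obtain ⟨hB𝓑, hαB⟩ := mem_filter.mp hB
    rw [erase_inter, inter_comm, cast_card_erase_of_mem (mem_inter.mpr ⟨hαB, hα⟩), hm B hB𝓑 hαB]
  calc (#{B ∈ 𝓑 | α ∈ B} : ℤ) * (m - 1)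
      = ∑ B ∈ 𝓑 with α ∈ B, (#(S.erase α ∩ B) : ℤ) := by
        rw [sum_congr rfl hinter, sum_const, nsmul_eq_mul]
    _ = #(S.erase α) * lam := mod_cast h𝓑.sum_card_inter_of_notMem (notMem_erase α S)
    _ = lam * (#S - 1) := by rw [cast_card_erase_of_mem hα, mul_comm]

theorem card_sub_one_mul_sub_one_eq (h𝓑 : IsPairwiseBalanced 𝓑 lam) (hlam : lam ≠ 0) {α : Ω}
    {S T : Finset Ω} (hαS : α ∈ S) (hαT : α ∈ T) {m n : ℕ}
    (hm : ∀ B ∈ 𝓑, α ∈ B → #(B ∩ S) = m) (hn : ∀ B ∈ 𝓑, α ∈ B → #(B ∩ T) = n) :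
    ((#S : ℤ) - 1) * (n - 1) = (m - 1) * (#T - 1) := by
  have hS := h𝓑.card_blocks_through_mul hαS hm
  have hT := h𝓑.card_blocks_through_mul hαT hn
  refine mul_left_cancel₀ (Nat.cast_ne_zero.mpr hlam) ?_
  linear_combination (m - 1) * hT - (n - 1) * hS

variable [Fintype Ω]

theorem card_mul_mul_sub_one (h𝓑 : IsPairwiseBalanced 𝓑 lam) (hk : ∀ B ∈ 𝓑, #B = k) :
    (#𝓑 : ℤ) * k * (k - 1) = lam * Fintype.card Ω * (Fintype.card Ω - 1) := by
  have hflags : ∑ α, (#{B ∈ 𝓑 | α ∈ B} : ℤ) = #𝓑 * k :=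
    mod_cast (sum_card_blocks_through 𝓑).trans (sum_const_nat hk)
  have hpoint : ∀ α, (#{B ∈ 𝓑 | α ∈ B} : ℤ) * (k - 1) = lam * (Fintype.card Ω - 1) := fun α =>
    h𝓑.card_blocks_through_mul (mem_univ α) fun B hB _ => by rw [inter_univ, hk B hB]
  calc (#𝓑 : ℤ) * k * (k - 1)
      = ∑ α, (#{B ∈ 𝓑 | α ∈ B} : ℤ) * (k - 1) := by rw [← sum_mul, hflags]
    _ = lam * Fintype.card Ω * (Fintype.card Ω - 1) := by
        simp only [hpoint, sum_const, card_univ, nsmul_eq_mul]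
        ring

theorem card_sub_card_parts_mul (h𝓑 : IsPairwiseBalanced 𝓑 lam) (hlam : lam ≠ 0)
    (hk : ∀ B ∈ 𝓑, #B = k) (P : Finpartition (univ : Finset Ω))
    (hℓ : ∀ B ∈ 𝓑, ∀ Δ ∈ P.parts, (B ∩ Δ).Nonempty → #(B ∩ Δ) = ℓ) :
    ((Fintype.card Ω : ℤ) - #P.parts) * (k - 1) =
      #P.parts * ((ℓ - 1) * (Fintype.card Ω - 1)) := by
  have hclass : ∀ Δ ∈ P.parts, ((#Δ : ℤ) - 1) * (k - 1) = (ℓ - 1) * (Fintype.card Ω - 1) := by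
    intro Δ hΔ
    obtain ⟨α, hα⟩ := P.nonempty_of_mem_parts hΔ
    exact h𝓑.card_sub_one_mul_sub_one_eq hlam hα (mem_univ α)
      (fun B hB hαB => hℓ B hB Δ hΔ ⟨α, mem_inter.mpr ⟨hαB, hα⟩⟩)
      (fun B hB _ => by rw [inter_univ, hk B hB])
  have hcard : ∑ Δ ∈ P.parts, (#Δ : ℤ) = Fintype.card Ω := mod_cast P.sum_card_parts
  calc ((Fintype.card Ω : ℤ) - #P.parts) * (k - 1)
      = ∑ Δ ∈ P.parts, ((#Δ : ℤ) - 1) * (k - 1) := by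
        rw [← sum_mul, sum_sub_distrib, hcard, sum_const, nsmul_one]
    _ = #P.parts * ((ℓ - 1) * (Fintype.card Ω - 1)) := by
        rw [sum_congr rfl hclass, sum_const, nsmul_eq_mul]

end IsPairwiseBalanced

theorem dvd_mul_mul_sub_one_of_sub_mul_eq {R : Type*} [CommRing R] {v k a d l : R}
    (hdvd : k ∣ a * v * (v - 1)) (hsub : (v - d) * (k - 1) = d * ((l - 1) * (v - 1))) :
    k ∣ a * l * d * (d - 1) := by
  obtain ⟨x, hx⟩ : ∃ x, x = k - 1 - d * (l - 1) := ⟨_, rfl⟩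
  have hvx : v * x = d * (k - l) := by linear_combination hsub + v * hx
  have hvx_sub : (v - 1) * x = (d - 1) * (k - 1) := by linear_combination hvx - hx
  have hsq : x ^ 2 * (a * v * (v - 1)) =
      k * (a * d * (d - 1) * (k - l - 1)) + a * l * d * (d - 1) := by
    linear_combination a * ((v - 1) * x) * hvx + a * d * (k - l) * hvx_sub
  exact (dvd_add_right (dvd_mul_right _ _)).mp (hsq ▸ hdvd.mul_left _)

theorem stmt_5_general [Fintype Ω] (h𝓑 : IsPairwiseBalanced 𝓑 lam) (hk : ∀ B ∈ 𝓑, #B = k)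
    (P : Finpartition (univ : Finset Ω))
    (hℓ : ∀ B ∈ 𝓑, ∀ Δ ∈ P.parts, (B ∩ Δ).Nonempty → #(B ∩ Δ) = ℓ) :
    k ∣ lam * ℓ * #P.parts * (#P.parts - 1) := by
  obtain rfl | hlam := eq_or_ne lam 0
  · simp only [zero_mul, dvd_zero]
  obtain hd | hd := Nat.eq_zero_or_pos #P.parts
  · simp only [hd, mul_zero, zero_mul, dvd_zero]
  have hdvd : (k : ℤ) ∣ lam * Fintype.card Ω * (Fintype.card Ω - 1) := by
    rw [← h𝓑.card_mul_mul_sub_one hk]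
    exact (dvd_mul_left _ _).mul_right _
  have h := dvd_mul_mul_sub_one_of_sub_mul_eq hdvd (h𝓑.card_sub_card_parts_mul hlam hk P hℓ)
  rw [← Nat.cast_pred hd] at h
  exact_mod_cast h

end

theorem stmt_5
    {Ω : Type*} [Fintype Ω] [DecidableEq Ω]
    (v k lam c d ℓ : ℕ)
    (𝓑 𝓒 : Finset (Finset Ω))
    (G : Subgroup (Equiv.Perm Ω))
    (hv : Fintype.card Ω = v)
    (hlam1 : 1 ≤ lam)
    (hkcard : ∀ B ∈ 𝓑, B.card = k)
    (hpairs : ∀ α β : Ω, α ≠ β → (𝓑.filter (fun B => α ∈ B ∧ β ∈ B)).card = lam)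
    (hk2 : 2 < k) (hkv : k < v)
    (hGB : ∀ g ∈ G, ∀ B ∈ 𝓑, B.image ⇑g ∈ 𝓑)
    (hflag : ∀ B₁ ∈ 𝓑, ∀ B₂ ∈ 𝓑, ∀ α₁ ∈ B₁, ∀ α₂ ∈ B₂,
        ∃ g ∈ G, B₁.image ⇑g = B₂ ∧ g α₁ = α₂)
    (hpart : ∀ ω : Ω, ∃! Δ, Δ ∈ 𝓒 ∧ ω ∈ Δ)
    (hdcard : 𝓒.card = d) (hd2 : 2 ≤ d)
    (hccard : ∀ Δ ∈ 𝓒, Δ.card = c) (hc2 : 2 ≤ c)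
    (hGC : ∀ g ∈ G, ∀ Δ ∈ 𝓒, Δ.image ⇑g ∈ 𝓒)
    (hl2 : 2 ≤ ℓ)
    (hlcap : ∀ B ∈ 𝓑, ∀ Δ ∈ 𝓒, (B ∩ Δ).Nonempty → (B ∩ Δ).card = ℓ)
    : k ∣ lam * ℓ * (ℓ - 1) ^ 2 * d * (d - 1) := by
  have hempty : ∅ ∉ 𝓒 := fun h => absurd (hccard ∅ h) (by rw [Finset.card_empty]; omega)
  have hdvd : k ∣ lam * ℓ * d * (d - 1) := hdcard ▸ stmt_5_general hpairs hkcard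
    (.ofExistsUnique 𝓒 (fun Δ _ => Δ.subset_univ) (fun ω _ => hpart ω) hempty) hlcap
  exact hdvd.trans ⟨(ℓ - 1) ^ 2, by ring⟩
end

section
/- Assume Hypothesis (H), and suppose p is a prime such that 0 ≤ d − p < k/ℓ < p and p does not divide the number of blocks b = vr/k. Then p does not divide the order of the permutation group D = G^C induced by G on the class partition C. -/
/-!
Since `p` does not divide the number of blocks, some block `B` has a stabilizer `H` of index prime
to `p` in `G`. The group `H` permutes the `k / ℓ` classes met by `B` and the `d - k / ℓ` classes
missed by `B`. Both numbers are less than `p`, so all orbits of `H` on classes are shorter than `p`,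
and `H` induces on the classes a group of order prime to `p`. The order of `G^C` divides the product
of this order and `|G : H|`.
-/

open MulAction
open scoped Finset Pointwise

section GroupActions

variable {G X Y : Type*} [Group G] [MulAction G X] [MulAction G Y] {p : ℕ}

theorem index_dvd_relIndex_mul_index (K H : Subgroup G) : K.index ∣ K.relIndex H * H.index := by
  rw [← Subgroup.inf_relIndex_right, Subgroup.relIndex_mul_index inf_le_right]
  exact Subgroup.index_dvd_of_le inf_le_left

theorem exists_not_dvd_index_stabilizer (hX : ¬ p ∣ Nat.card X) :
    ∃ x : X, ¬ p ∣ (stabilizer G x).index := by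
  have : Finite X := Nat.finite_of_card_ne_zero fun h ↦ hX (h ▸ dvd_zero p)
  have : Fintype (orbitRel.Quotient G X) := Fintype.ofFinite _
  by_contra! h
  refine hX ?_
  rw [Nat.card_congr (selfEquivSigmaOrbits G X), Nat.card_sigma]
  exact Finset.dvd_sum fun ω _ ↦ (h ω.out).trans (index_stabilizer G ω.out).dvd

theorem ncard_orbit_zpowers (g : G) (y : Y) :
    (orbit (Subgroup.zpowers g) y).ncard = period g y :=
  (Nat.card_congr (orbitZPowersEquiv g y)).trans (Nat.card_zmod _)

theorem not_dvd_index_ker_toPermHom_of_ncard_orbit_lt [Finite Y] (hp : p.Prime)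
    (hY : ∀ y : Y, (orbit G y).ncard < p) : ¬ p ∣ (toPermHom G Y).ker.index := by
  have : Fact p.Prime := ⟨hp⟩
  intro hdvd
  rw [Subgroup.index_ker] at hdvd
  obtain ⟨⟨σ, hσ⟩, hσ_order⟩ := exists_prime_orderOf_dvd_card' p hdvd
  obtain ⟨g, rfl⟩ := hσ
  have hg : orderOf (toPermHom G Y g) = p := (Subgroup.orderOf_coe _).trans hσ_order
  obtain ⟨y, hy⟩ : ∃ y : Y, g • y ≠ y := by
    by_contra! hfix
    have hg_one : toPermHom G Y g = 1 := Equiv.ext hfix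
    exact hp.one_lt.ne (by rw [← hg, hg_one, orderOf_one])
  have hpow : g ^ p • y = y := by
    have hpow_perm : toPermHom G Y (g ^ p) = 1 := by rw [map_pow, ← hg, pow_orderOf_eq_one]
    exact Equiv.congr_fun hpow_perm y
  have hperiod : period g y = p :=
    (hp.eq_one_or_self_of_dvd _ (pow_smul_eq_iff_period_dvd.1 hpow)).resolve_left
      (period_eq_one_iff.not.2 hy)
  have hle : (orbit (Subgroup.zpowers g) y).ncard ≤ (orbit G y).ncard :=
    Set.ncard_le_ncard (orbit_subgroup_subset _ y)
  rw [ncard_orbit_zpowers, hperiod] at hle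
  exact hle.not_gt (hY y)

theorem not_dvd_index_ker_toPermHom_of_relation [Finite Y] (hp : p.Prime)
    (hX : ¬ p ∣ Nat.card X) (r : X → Y → Prop) (hr : ∀ (g : G) x y, r (g • x) (g • y) ↔ r x y)
    (hlt : ∀ x, {y | r x y}.ncard < p) (hlt_not : ∀ x, {y | ¬ r x y}.ncard < p) :
    ¬ p ∣ (toPermHom G Y).ker.index := by
  obtain ⟨x, hx⟩ := exists_not_dvd_index_stabilizer (G := G) hX
  have hr_stabilizer (h : stabilizer G x) (y : Y) : r x (h • y) ↔ r x y := by
    simpa only [mem_stabilizer_iff.1 h.2, Subgroup.smul_def] using hr h.1 x y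
  have horbit (y : Y) : (orbit (stabilizer G x) y).ncard < p := by
    by_cases hxy : r x y
    · refine (Set.ncard_le_ncard ?_).trans_lt (hlt x)
      rintro _ ⟨h, rfl⟩
      exact (hr_stabilizer h y).2 hxy
    · refine (Set.ncard_le_ncard ?_).trans_lt (hlt_not x)
      rintro _ ⟨h, rfl⟩
      exact (hr_stabilizer h y).not.2 hxy
  have hrel : ¬ p ∣ (toPermHom G Y).ker.relIndex (stabilizer G x) :=
    not_dvd_index_ker_toPermHom_of_ncard_orbit_lt hp horbit
  intro hdvd
  have hdvd_mul := hdvd.trans (index_dvd_relIndex_mul_index _ (stabilizer G x))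
  exact (hp.dvd_mul.1 hdvd_mul).elim hrel hx

end GroupActions

section Blocks

variable {Ω : Type*} [DecidableEq Ω] {k ℓ : ℕ} {𝓑 𝓒 : Finset (Finset Ω)}

theorem card_filter_inter_nonempty_mul_s6 {B : Finset Ω} (hpart : ∀ ω ∈ B, ∃! Δ, Δ ∈ 𝓒 ∧ ω ∈ Δ)
    (hℓ : ∀ Δ ∈ 𝓒, (B ∩ Δ).Nonempty → #(B ∩ Δ) = ℓ) :
    #{Δ ∈ 𝓒 | (B ∩ Δ).Nonempty} * ℓ = #B := by
  have hclass (ω : Ω) (hω : ω ∈ B) : #{Δ ∈ 𝓒 | ω ∈ Δ} = 1 := by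
    simpa only [Finset.card_eq_one, Finset.singleton_iff_unique_mem, Finset.mem_filter]
      using hpart ω hω
  calc
    #{Δ ∈ 𝓒 | (B ∩ Δ).Nonempty} * ℓ = ∑ Δ ∈ 𝓒 with (B ∩ Δ).Nonempty, #(B ∩ Δ) := by
      rw [Finset.sum_const_nat]
      simpa only [Finset.mem_filter, and_imp] using hℓ
    _ = ∑ Δ ∈ 𝓒, #(B ∩ Δ) :=
      Finset.sum_filter_of_ne fun Δ _ hne ↦ Finset.card_ne_zero.1 hne
    _ = #B := by rw [Finset.sum_card_inter hclass, mul_one]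

theorem stmt_6_general {G : Type*} [Group G] [MulAction G Ω]
    (hkcard : ∀ B ∈ 𝓑, #B = k)
    (hGB : ∀ g : G, ∀ B ∈ 𝓑, g • B ∈ 𝓑)
    (hpart : ∀ ω : Ω, ∃! Δ, Δ ∈ 𝓒 ∧ ω ∈ Δ)
    (hGC : ∀ g : G, ∀ Δ ∈ 𝓒, g • Δ ∈ 𝓒)
    (hl : 0 < ℓ)
    (hlcap : ∀ B ∈ 𝓑, ∀ Δ ∈ 𝓒, (B ∩ Δ).Nonempty → #(B ∩ Δ) = ℓ)
    {p : ℕ} (hp : p.Prime)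
    (hdp : #𝓒 < p + k / ℓ) (hkp : k / ℓ < p)
    (hpb : ¬ p ∣ #𝓑)
    (K : Subgroup G) (hK : ∀ g, g ∈ K ↔ ∀ Δ ∈ 𝓒, g • Δ = Δ) :
    ¬ p ∣ K.index := by
  let blocks : SubMulAction G (Finset Ω) := ⟨𝓑, fun g {B} hB ↦ hGB g B hB⟩
  let classes : SubMulAction G (Finset Ω) := ⟨𝓒, fun g {Δ} hΔ ↦ hGC g Δ hΔ⟩
  have : Finite classes := 𝓒.finite_toSet
  have hker : K = (toPermHom G classes).ker := by
    ext g
    exact (hK g).trans ⟨fun h ↦ Equiv.ext fun Δ ↦ Subtype.ext (h Δ Δ.2),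
      fun h Δ hΔ ↦ congrArg Subtype.val (Equiv.congr_fun h ⟨Δ, hΔ⟩)⟩
  have hncard (P : Finset Ω → Prop) [DecidablePred P] :
      {Δ : classes | P Δ}.ncard = #{Δ ∈ 𝓒 | P Δ} := by
    rw [← Set.ncard_coe_finset, Finset.coe_filter, Set.ofPred_and, Set.inter_comm]
    exact Set.ncard_subtype (· ∈ 𝓒) {Δ | P Δ}
  have hmeet (B : blocks) : #{Δ ∈ 𝓒 | (B.1 ∩ Δ).Nonempty} = k / ℓ := by
    refine Nat.eq_div_of_mul_eq_left hl.ne' ?_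
    rw [card_filter_inter_nonempty_mul_s6 (fun ω _ ↦ hpart ω) (hlcap B B.2), hkcard B B.2]
  have hmiss (B : blocks) : #{Δ ∈ 𝓒 | ¬ (B.1 ∩ Δ).Nonempty} < p := by
    have hsum := Finset.card_filter_add_card_filter_not (s := 𝓒) fun Δ ↦ (B.1 ∩ Δ).Nonempty
    rw [hmeet] at hsum
    omega
  have hblocks : Nat.card blocks = #𝓑 := (Nat.card_coe_set_eq _).trans (Set.ncard_coe_finset 𝓑)
  rw [hker]
  refine not_dvd_index_ker_toPermHom_of_relation (X := blocks) hp (hblocks ▸ hpb)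
    (fun B Δ ↦ (B.1 ∩ Δ.1).Nonempty) (fun g B Δ ↦ ?_)
    (fun B ↦ (hncard _).trans_lt ((hmeet B).trans_lt hkp))
    (fun B ↦ (hncard _).trans_lt (hmiss B))
  rw [SubMulAction.val_smul, SubMulAction.val_smul, ← Finset.smul_finset_inter,
    Finset.smul_finset_nonempty]

end Blocks

theorem stmt_6
    {Ω : Type*} [Fintype Ω] [DecidableEq Ω]
    (v k lam c d ℓ : ℕ)
    (𝓑 𝓒 : Finset (Finset Ω))
    (G : Subgroup (Equiv.Perm Ω))
    (hv : Fintype.card Ω = v)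
    (hlam1 : 1 ≤ lam)
    (hkcard : ∀ B ∈ 𝓑, B.card = k)
    (hpairs : ∀ α β : Ω, α ≠ β → (𝓑.filter (fun B => α ∈ B ∧ β ∈ B)).card = lam)
    (hk2 : 2 < k) (hkv : k < v)
    (hGB : ∀ g ∈ G, ∀ B ∈ 𝓑, B.image ⇑g ∈ 𝓑)
    (hflag : ∀ B₁ ∈ 𝓑, ∀ B₂ ∈ 𝓑, ∀ α₁ ∈ B₁, ∀ α₂ ∈ B₂,
        ∃ g ∈ G, B₁.image ⇑g = B₂ ∧ g α₁ = α₂)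
    (hpart : ∀ ω : Ω, ∃! Δ, Δ ∈ 𝓒 ∧ ω ∈ Δ)
    (hdcard : 𝓒.card = d) (hd2 : 2 ≤ d)
    (hccard : ∀ Δ ∈ 𝓒, Δ.card = c) (hc2 : 2 ≤ c)
    (hGC : ∀ g ∈ G, ∀ Δ ∈ 𝓒, Δ.image ⇑g ∈ 𝓒)
    (hl2 : 2 ≤ ℓ)
    (hlcap : ∀ B ∈ 𝓑, ∀ Δ ∈ 𝓒, (B ∩ Δ).Nonempty → (B ∩ Δ).card = ℓ)
    (p : ℕ) (hp : p.Prime)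
    (hpd : p ≤ d) (hdp : d - p < k / ℓ) (hkp : k / ℓ < p)
    (hpb : ¬ p ∣ 𝓑.card)
    (K : Subgroup ↥G)
    (hK : ∀ g : ↥G, g ∈ K ↔ ∀ Δ ∈ 𝓒, Δ.image ⇑(g : Equiv.Perm Ω) = Δ)
    : ¬ p ∣ K.index := by
  exact stmt_6_general hkcard (fun g ↦ hGB g.1 g.2) hpart (fun g ↦ hGC g.1 g.2) (by omega) hlcap hp
    (by omega) hkp hpb K hK
end

section
/- Assume Hypothesis (H). Let B ∈ B, let X = (G_B)^C be the subgroup of D = G^C induced on C by the setwise stabilizer G_B of B, let c₀ be the common length of the orbits of the kernel K on P, and set x = c₀/gcd(c₀, ℓ). If c₀ > 1, then c₀ divides c, x divides b, and the index |D : X| divides b/x. -/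
/-!
A class `Δ` is a union of `K`-orbits, so `c₀ ∣ c`.

If `Δ` meets `B`, the stabilizer `K_B` acts on `B ∩ Δ`, and for `a ∈ B ∩ Δ` the product of
`|K : K_B|` with the length of the `K_B`-orbit of `a` is `|K : K_B ∩ K_a|`, a multiple of
`|K : K_a| = c₀`. Summing over the `K_B`-orbits on `B ∩ Δ` gives `c₀ ∣ |K : K_B| * ℓ`, so
`x = c₀ / gcd(c₀, ℓ)` divides `|K : K_B|`.

The orbit of `B` under `G_B K` is its `K`-orbit, of length `|K : K_B|`, so the number of blocks
is `b = |K : K_B| * |G : G_B K|`.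
-/

open MulAction
open scoped Finset Pointwise

section

variable {G α : Type*} [Group G] [MulAction G α]

theorem ncard_orbit_subgroup_eq_relIndex (L : Subgroup G) (a : α) :
    (orbit L a).ncard = (stabilizer G a).relIndex L :=
  (index_stabilizer L a).symm

theorem coe_eq_mul_iff_forall_mem_iff {J H K : Subgroup G} :
    (J : Set G) = H * K ↔ ∀ g, g ∈ J ↔ ∃ x ∈ K, g * x⁻¹ ∈ H := by
  have hmul (g : G) : g ∈ (H * K : Set G) ↔ ∃ x ∈ K, g * x⁻¹ ∈ H := by
    rw [Set.mem_mul]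
    exact ⟨fun ⟨s, hs, x, hx, hsx⟩ => ⟨x, hx, eq_mul_inv_of_mul_eq hsx ▸ hs⟩,
      fun ⟨x, hx, hgx⟩ => ⟨g * x⁻¹, hgx, x, hx, inv_mul_cancel_right g x⟩⟩
  simp only [Set.ext_iff, SetLike.mem_coe, hmul]

theorem orbit_subgroup_eq_of_coe_eq_stabilizer_mul {J K : Subgroup G} {a : α}
    (hJ : (J : Set G) = stabilizer G a * K) : orbit J a = orbit K a := by
  have hK : (K : Set G) ⊆ J := hJ ▸ Set.subset_mul_right _ (one_mem (stabilizer G a))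
  refine Set.Subset.antisymm ?_ ?_
  · rintro _ ⟨j, rfl⟩
    obtain ⟨s, hs, y, hy, hsy : s * y = (j : G)⁻¹⟩ : (j : G)⁻¹ ∈ (stabilizer G a * K : Set G) :=
      hJ ▸ inv_mem j.2
    refine ⟨⟨y⁻¹, inv_mem hy⟩, ?_⟩
    calc y⁻¹ • a = y⁻¹ • s⁻¹ • a := by rw [mem_stabilizer_iff.1 (inv_mem hs)]
      _ = (j : G) • a := by rw [← mul_smul, ← mul_inv_rev, hsy, inv_inv]
  · rintro _ ⟨y, rfl⟩
    exact ⟨⟨y, hK y.2⟩, rfl⟩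

theorem ncard_orbit_mul_index_of_coe_eq_stabilizer_mul {J K : Subgroup G} {a : α}
    (hJ : (J : Set G) = stabilizer G a * K) :
    (orbit K a).ncard * J.index = (orbit G a).ncard := by
  have hle : stabilizer G a ≤ J :=
    SetLike.coe_subset_coe.1 (hJ ▸ Set.subset_mul_left _ (one_mem K))
  rw [← orbit_subgroup_eq_of_coe_eq_stabilizer_mul hJ, ncard_orbit_subgroup_eq_relIndex,
    Subgroup.relIndex_mul_index hle, index_stabilizer]

theorem ncard_orbit_dvd_index_mul_ncard_orbit_subgroup (L : Subgroup G) (a : α) :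
    (orbit G a).ncard ∣ L.index * (orbit L a).ncard := by
  rw [ncard_orbit_subgroup_eq_relIndex, ← Subgroup.inf_relIndex_right, mul_comm,
    Subgroup.relIndex_mul_index inf_le_right, ← index_stabilizer]
  exact Subgroup.index_dvd_of_le inf_le_left

theorem dvd_mul_card_of_forall_dvd_mul_ncard_orbit {S : Finset α} {m n : ℕ}
    (hS : ∀ g : G, ∀ a ∈ S, g • a ∈ S) (hn : ∀ a ∈ S, n ∣ m * (orbit G a).ncard) :
    n ∣ m * #S := by
  classical
  rw [Finset.card_eq_sum_card_image (Quotient.mk (orbitRel G α)) S, Finset.mul_sum]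
  refine Finset.dvd_sum fun q hq => ?_
  obtain ⟨a, ha, rfl⟩ := Finset.mem_image.1 hq
  have hfiber : (orbit G a : Set α) = ↑{b ∈ S | Quotient.mk (orbitRel G α) b = ⟦a⟧} := by
    ext b
    simp only [Finset.coe_filter, Set.mem_ofPred_eq, Quotient.eq, orbitRel_apply]
    refine ⟨fun hb => ⟨?_, hb⟩, And.right⟩
    obtain ⟨g, rfl⟩ := hb
    exact hS g a ha
  rw [← Set.ncard_coe_finset, ← hfiber]
  exact hn a ha

theorem dvd_index_mul_card_of_forall_dvd_ncard_orbit {L : Subgroup G} {S : Finset α} {n : ℕ}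
    (hS : ∀ g ∈ L, ∀ a ∈ S, g • a ∈ S) (hn : ∀ a ∈ S, n ∣ (orbit G a).ncard) :
    n ∣ L.index * #S :=
  dvd_mul_card_of_forall_dvd_mul_ncard_orbit (fun g : L => hS g g.2) fun a ha =>
    (hn a ha).trans (ncard_orbit_dvd_index_mul_ncard_orbit_subgroup L a)

theorem dvd_ncard_orbit_mul_card_inter [DecidableEq α] {B S : Finset α} {n : ℕ}
    (hS : ∀ g : G, g • S = S) (hn : ∀ a ∈ S, n ∣ (orbit G a).ncard) :
    n ∣ (orbit G B).ncard * #(B ∩ S) := by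
  rw [← index_stabilizer]
  refine dvd_index_mul_card_of_forall_dvd_ncard_orbit (fun g hg a ha => ?_) fun a ha =>
    hn a (Finset.mem_inter.1 ha).2
  rw [← mem_stabilizer_iff.1 hg, ← hS g, ← Finset.smul_finset_inter]
  exact Finset.smul_mem_smul_finset ha

theorem orbit_eq_of_flag_transitive [DecidableEq α] {𝓑 : Set (Finset α)} {B : Finset α}
    (hinv : ∀ g : G, ∀ X ∈ 𝓑, g • X ∈ 𝓑)
    (hflag : ∀ B₁ ∈ 𝓑, ∀ B₂ ∈ 𝓑, ∀ α₁ ∈ B₁, ∀ α₂ ∈ B₂, ∃ g : G, g • B₁ = B₂ ∧ g • α₁ = α₂)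
    (hne : ∀ X ∈ 𝓑, X.Nonempty) (hB : B ∈ 𝓑) : orbit G B = 𝓑 := by
  refine Set.Subset.antisymm (Set.range_subset_iff.2 fun g => hinv g B hB) fun X hX => ?_
  obtain ⟨β, hβ⟩ := hne B hB
  obtain ⟨ξ, hξ⟩ := hne X hX
  obtain ⟨g, hgB, -⟩ := hflag B hB X hX β hβ ξ hξ
  exact ⟨g, hgB⟩

end

theorem stmt_8_general {G Ω : Type*} [Group G] [MulAction G Ω] [DecidableEq Ω]
    {𝓑 : Finset (Finset Ω)} {B Δ : Finset Ω} {K J : Subgroup G} {c₀ : ℕ}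
    (h𝓑 : orbit G B = 𝓑) (hΔ : ∀ g : K, g • Δ = Δ) (hBΔ : (B ∩ Δ).Nonempty)
    (hJ : (J : Set G) = stabilizer G B * K) (hc₀ : ∀ ω ∈ Δ, (orbit K ω).ncard = c₀) :
    c₀ ∣ #Δ ∧ c₀ / c₀.gcd #(B ∩ Δ) ∣ #𝓑 ∧ J.index ∣ #𝓑 / (c₀ / c₀.gcd #(B ∩ Δ)) := by
  have hdvd : ∀ ω ∈ Δ, c₀ ∣ (orbit K ω).ncard := fun ω hω => (hc₀ ω hω).symm.dvd
  have hfix : orbit K Δ = {Δ} := by simp [orbit, hΔ]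
  have hclass : c₀ ∣ #Δ := by
    simpa [hfix] using dvd_ncard_orbit_mul_card_inter (B := Δ) hΔ hdvd
  have horbit : c₀ / c₀.gcd #(B ∩ Δ) ∣ (orbit K B).ncard := by
    rw [Nat.div_dvd_iff_dvd_mul (Nat.gcd_dvd_left _ _) (Nat.gcd_pos_of_pos_right _ hBΔ.card_pos),
      mul_comm, Nat.dvd_mul_gcd_iff_dvd_mul]
    exact dvd_ncard_orbit_mul_card_inter hΔ hdvd
  have hcount : (orbit K B).ncard * J.index = #𝓑 := by
    rw [ncard_orbit_mul_index_of_coe_eq_stabilizer_mul hJ, h𝓑, Set.ncard_coe_finset]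
  exact ⟨hclass, hcount ▸ horbit.mul_right _,
    Nat.dvd_div_of_mul_dvd (hcount ▸ mul_dvd_mul_right horbit _)⟩

theorem stmt_8
    {Ω : Type*} [Fintype Ω] [DecidableEq Ω]
    (v k lam c d ℓ : ℕ)
    (𝓑 𝓒 : Finset (Finset Ω))
    (G : Subgroup (Equiv.Perm Ω))
    (hv : Fintype.card Ω = v)
    (hlam1 : 1 ≤ lam)
    (hkcard : ∀ B ∈ 𝓑, B.card = k)
    (hpairs : ∀ α β : Ω, α ≠ β → (𝓑.filter (fun B => α ∈ B ∧ β ∈ B)).card = lam)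
    (hk2 : 2 < k) (hkv : k < v)
    (hGB : ∀ g ∈ G, ∀ B ∈ 𝓑, B.image ⇑g ∈ 𝓑)
    (hflag : ∀ B₁ ∈ 𝓑, ∀ B₂ ∈ 𝓑, ∀ α₁ ∈ B₁, ∀ α₂ ∈ B₂,
        ∃ g ∈ G, B₁.image ⇑g = B₂ ∧ g α₁ = α₂)
    (hpart : ∀ ω : Ω, ∃! Δ, Δ ∈ 𝓒 ∧ ω ∈ Δ)
    (hdcard : 𝓒.card = d) (hd2 : 2 ≤ d)
    (hccard : ∀ Δ ∈ 𝓒, Δ.card = c) (hc2 : 2 ≤ c)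
    (hGC : ∀ g ∈ G, ∀ Δ ∈ 𝓒, Δ.image ⇑g ∈ 𝓒)
    (hl2 : 2 ≤ ℓ)
    (hlcap : ∀ B ∈ 𝓑, ∀ Δ ∈ 𝓒, (B ∩ Δ).Nonempty → (B ∩ Δ).card = ℓ)
    (B : Finset Ω) (hB : B ∈ 𝓑)
    -- K is the kernel of the action of G on 𝓒
    (K : Subgroup ↥G)
    (hK : ∀ g : ↥G, g ∈ K ↔ ∀ Δ ∈ 𝓒, Δ.image ⇑(g : Equiv.Perm Ω) = Δ)
    -- J = G_B · K, so that |D : X| = |G : G_B K| = J.index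
    (J : Subgroup ↥G)
    (hJ : ∀ g : ↥G, g ∈ J ↔ ∃ x ∈ K, B.image ⇑((g * x⁻¹ : ↥G) : Equiv.Perm Ω) = B)
    -- c₀ is the common length of the K-orbits on the point set
    (c₀ x₀ : ℕ)
    (hc₀ : ∀ ω : Ω, Set.ncard {ω' : Ω | ∃ g ∈ K, (g : Equiv.Perm Ω) ω = ω'} = c₀)
    (hx₀ : x₀ = c₀ / Nat.gcd c₀ ℓ)
    (hc₀1 : 1 < c₀)
    : c₀ ∣ c ∧ x₀ ∣ 𝓑.card ∧ J.index ∣ 𝓑.card / x₀ := by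
  have hne : ∀ X ∈ 𝓑, X.Nonempty := fun X hX =>
    Finset.card_pos.1 (by rw [hkcard X hX]; omega)
  obtain ⟨β, hβ⟩ := hne B hB
  obtain ⟨Δ, ⟨hΔ, hβΔ⟩, -⟩ := hpart β
  have hBΔ : (B ∩ Δ).Nonempty := ⟨β, Finset.mem_inter.2 ⟨hβ, hβΔ⟩⟩
  have h𝓑 : orbit G B = 𝓑 := by
    refine orbit_eq_of_flag_transitive (fun g => hGB g g.2) ?_ hne hB
    intro B₁ hB₁ B₂ hB₂ α₁ hα₁ α₂ hα₂
    obtain ⟨g, hg, h⟩ := hflag B₁ hB₁ B₂ hB₂ α₁ hα₁ α₂ hα₂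
    exact ⟨⟨g, hg⟩, h⟩
  have hJK : (J : Set G) = stabilizer G B * K := coe_eq_mul_iff_forall_mem_iff.2 hJ
  have horbit : ∀ ω : Ω, (orbit K ω).ncard = c₀ := fun ω => by
    simp [← hc₀ ω, orbit, Set.range, Subgroup.smul_def]
  have h := stmt_8_general h𝓑 (fun g => (hK g).1 g.2 Δ hΔ) hBΔ hJK fun ω _ => horbit ω
  rwa [hccard Δ hΔ, hlcap B hB Δ hΔ hBΔ, ← hx₀] at h
end

section
/- Assume Hypothesis (H) with ℓ = 2. Then for each class Δ ∈ C, the permutation group L = (G_Δ)^Δ induced on Δ by the setwise stabilizer G_Δ is 2-transitive on Δ (of degree c). -/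
/-!
Carry `x, y ∈ Δ` to `x', y' ∈ Δ` as follows. Choose design blocks `B ∋ x, y` and `B' ∋ x', y'`, and
by flag-transitivity an element `g` taking `(x, B)` to `(x', B')`. Since `g • Δ` meets `Δ` in `x'`,
`g` fixes `Δ`, so `g • y` lies in `B' ∩ Δ`; as this intersection has at most two points and
`g • y ≠ x'`, it follows that `g • y = y'`.
-/

open MulAction
open scoped Pointwise

section FlagTransitive

variable {G X : Type*} [Group G] [MulAction G X] {𝓑 𝓒 : Set (Set X)} {Δ : Set X}

variable (G 𝓑) in
/-- Transitivity of `G` on the flags `(x, B)`, `x ∈ B ∈ 𝓑`, of the incidence structure whose points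
are the elements of `X` and whose blocks are the members of `𝓑`. That `G` maps `𝓑` to itself is not
part of the definition. -/
def IsFlagTransitive : Prop :=
  ∀ ⦃B⦄, B ∈ 𝓑 → ∀ ⦃B'⦄, B' ∈ 𝓑 → ∀ ⦃x⦄, x ∈ B → ∀ ⦃x'⦄, x' ∈ B' →
    ∃ g : G, g • B = B' ∧ g • x = x'

theorem isBlock_of_mem_of_pairwiseDisjoint (hdisj : 𝓒.PairwiseDisjoint id)
    (hG : ∀ g : G, ∀ Δ ∈ 𝓒, g • Δ ∈ 𝓒) (hΔ : Δ ∈ 𝓒) : IsBlock G Δ :=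
  fun g h hne ↦ hdisj (hG g Δ hΔ) (hG h Δ hΔ) hne

theorem eq_of_encard_le_two {s : Set X} (hs : s.encard ≤ 2) {x y z : X} (hx : x ∈ s) (hy : y ∈ s)
    (hz : z ∈ s) (hxy : x ≠ y) (hxz : x ≠ z) : y = z := by
  by_contra hyz
  have hthree : ({x, y, z} : Set X).encard = 3 :=
    Set.encard_eq_three.mpr ⟨x, y, z, hxy, hxz, hyz, rfl⟩
  have hsub : {x, y, z} ⊆ s := by simp [Set.insert_subset_iff, hx, hy, hz]
  exact absurd (hthree ▸ (Set.encard_le_encard hsub).trans hs) (by norm_num)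

/-- Here `Δ` is a block of imprimitivity of `G`, while `𝓑` is the set of blocks of the design. -/
theorem stmt_9_general (hflag : IsFlagTransitive G 𝓑) (hΔ : IsBlock G Δ)
    (hjoin : ∀ x ∈ Δ, ∀ y ∈ Δ, x ≠ y → ∃ B ∈ 𝓑, x ∈ B ∧ y ∈ B)
    (hinter : ∀ B ∈ 𝓑, (B ∩ Δ).encard ≤ 2) :
    IsMultiplyPretransitive (stabilizer G Δ) Δ 2 := by
  refine is_two_pretransitive_iff.mpr ?_
  rintro ⟨x, hx⟩ ⟨y, hy⟩ ⟨x', hx'⟩ ⟨y', hy'⟩ hxy hxy'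
  rw [Ne, Subtype.mk.injEq] at hxy hxy'
  obtain ⟨B, hB, hxB, hyB⟩ := hjoin x hx y hy hxy
  obtain ⟨B', hB', hxB', hyB'⟩ := hjoin x' hx' y' hy' hxy'
  obtain ⟨g, rfl, rfl⟩ := hflag hB hB' hxB hxB'
  have hgΔ : g • Δ = Δ := hΔ.smul_eq_of_mem hx hx'
  have hgy : g • y ∈ g • B ∩ Δ :=
    ⟨Set.smul_mem_smul_set hyB, hgΔ.subset (Set.smul_mem_smul_set hy)⟩
  have hgxy : g • x ≠ g • y := (MulAction.injective g).ne hxy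
  have hgy' : g • y = y' :=
    eq_of_encard_le_two (hinter _ hB') ⟨hxB', hx'⟩ hgy ⟨hyB', hy'⟩ hgxy hxy'
  exact ⟨⟨g, hgΔ⟩, rfl, Subtype.ext hgy'⟩

end FlagTransitive

section FinsetDesign

variable {Ω : Type*} [DecidableEq Ω] {𝓑 𝓒 : Finset (Finset Ω)} {G : Subgroup (Equiv.Perm Ω)}

theorem coe_image_eq_smul (g : G) (s : Finset Ω) :
    ((s.image ⇑(g : Equiv.Perm Ω) : Finset Ω) : Set Ω) = g • (s : Set Ω) :=
  Finset.coe_image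

theorem isFlagTransitive_coe_image
    (hflag : ∀ B₁ ∈ 𝓑, ∀ B₂ ∈ 𝓑, ∀ α₁ ∈ B₁, ∀ α₂ ∈ B₂,
      ∃ g ∈ G, B₁.image ⇑g = B₂ ∧ g α₁ = α₂) :
    IsFlagTransitive G ((↑) '' (𝓑 : Set (Finset Ω)) : Set (Set Ω)) := by
  rintro _ ⟨B, hB, rfl⟩ _ ⟨B', hB', rfl⟩ x hx x' hx'
  obtain ⟨g, hg, hgB, hgx⟩ := hflag B hB B' hB' x hx x' hx'
  exact ⟨⟨g, hg⟩, by rw [← coe_image_eq_smul, hgB], hgx⟩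

theorem isBlock_coe_of_mem (hpart : ∀ ω : Ω, ∃! Δ, Δ ∈ 𝓒 ∧ ω ∈ Δ)
    (hGC : ∀ g ∈ G, ∀ Δ ∈ 𝓒, Δ.image ⇑g ∈ 𝓒) {Δ : Finset Ω} (hΔ : Δ ∈ 𝓒) :
    IsBlock G (Δ : Set Ω) := by
  refine isBlock_of_mem_of_pairwiseDisjoint (𝓒 := (↑) '' (𝓒 : Set (Finset Ω))) ?_ ?_ ⟨Δ, hΔ, rfl⟩
  · rintro _ ⟨Δ₁, hΔ₁, rfl⟩ _ ⟨Δ₂, hΔ₂, rfl⟩ hne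
    refine Set.disjoint_left.mpr fun ω hω₁ hω₂ ↦ hne ?_
    rw [(hpart ω).unique ⟨hΔ₁, hω₁⟩ ⟨hΔ₂, hω₂⟩]
  · rintro g _ ⟨Δ₁, hΔ₁, rfl⟩
    exact ⟨Δ₁.image ⇑(g : Equiv.Perm Ω), hGC g g.2 Δ₁ hΔ₁, coe_image_eq_smul g Δ₁⟩

theorem exists_joining_block {lam : ℕ} (hlam : 1 ≤ lam)
    (hpairs : ∀ α β : Ω, α ≠ β → (𝓑.filter (fun B => α ∈ B ∧ β ∈ B)).card = lam)
    {α β : Ω} (hαβ : α ≠ β) :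
    ∃ B ∈ ((↑) '' (𝓑 : Set (Finset Ω)) : Set (Set Ω)), α ∈ B ∧ β ∈ B := by
  obtain ⟨B, hB⟩ := Finset.card_pos.mp (hlam.trans_eq (hpairs α β hαβ).symm)
  obtain ⟨hB𝓑, hB⟩ := Finset.mem_filter.mp hB
  exact ⟨B, ⟨B, hB𝓑, rfl⟩, hB⟩

theorem encard_inter_coe_le {ℓ : ℕ} {Δ : Finset Ω}
    (hcap : ∀ B ∈ 𝓑, (B ∩ Δ).Nonempty → (B ∩ Δ).card = ℓ) :
    ∀ B ∈ ((↑) '' (𝓑 : Set (Finset Ω)) : Set (Set Ω)), (B ∩ Δ).encard ≤ ℓ := by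
  rintro _ ⟨B, hB, rfl⟩
  rw [← Finset.coe_inter, Set.encard_coe_eq_coe_finsetCard, Nat.cast_le]
  rcases (B ∩ Δ).eq_empty_or_nonempty with hempty | hne
  · simp [hempty]
  · exact (hcap B hB hne).le

theorem exists_perm_of_isMultiplyPretransitive_two {Δ : Finset Ω}
    (h : IsMultiplyPretransitive (stabilizer G (Δ : Set Ω)) (Δ : Set Ω) 2) :
    ∀ α ∈ Δ, ∀ β ∈ Δ, ∀ α' ∈ Δ, ∀ β' ∈ Δ, α ≠ β → α' ≠ β' →
      ∃ g ∈ G, Δ.image ⇑g = Δ ∧ g α = α' ∧ g β = β' := by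
  intro α hα β hβ α' hα' β' hβ' hαβ hαβ'
  have hne : (⟨α, hα⟩ : (Δ : Set Ω)) ≠ ⟨β, hβ⟩ := Subtype.coe_ne_coe.mp hαβ
  have hne' : (⟨α', hα'⟩ : (Δ : Set Ω)) ≠ ⟨β', hβ'⟩ := Subtype.coe_ne_coe.mp hαβ'
  obtain ⟨⟨g, hgΔ⟩, hgα, hgβ⟩ := is_two_pretransitive_iff.mp h hne hne'
  exact ⟨g, g.2, Finset.coe_injective ((coe_image_eq_smul g Δ).trans hgΔ),
    congrArg Subtype.val hgα, congrArg Subtype.val hgβ⟩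

end FinsetDesign

theorem stmt_9
    {Ω : Type*} [Fintype Ω] [DecidableEq Ω]
    (v k lam c d ℓ : ℕ)
    (𝓑 𝓒 : Finset (Finset Ω))
    (G : Subgroup (Equiv.Perm Ω))
    (hv : Fintype.card Ω = v)
    (hlam1 : 1 ≤ lam)
    (hkcard : ∀ B ∈ 𝓑, B.card = k)
    (hpairs : ∀ α β : Ω, α ≠ β → (𝓑.filter (fun B => α ∈ B ∧ β ∈ B)).card = lam)
    (hk2 : 2 < k) (hkv : k < v)
    (hGB : ∀ g ∈ G, ∀ B ∈ 𝓑, B.image ⇑g ∈ 𝓑)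
    (hflag : ∀ B₁ ∈ 𝓑, ∀ B₂ ∈ 𝓑, ∀ α₁ ∈ B₁, ∀ α₂ ∈ B₂,
        ∃ g ∈ G, B₁.image ⇑g = B₂ ∧ g α₁ = α₂)
    (hpart : ∀ ω : Ω, ∃! Δ, Δ ∈ 𝓒 ∧ ω ∈ Δ)
    (hdcard : 𝓒.card = d) (hd2 : 2 ≤ d)
    (hccard : ∀ Δ ∈ 𝓒, Δ.card = c) (hc2 : 2 ≤ c)
    (hGC : ∀ g ∈ G, ∀ Δ ∈ 𝓒, Δ.image ⇑g ∈ 𝓒)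
    (hl2 : 2 ≤ ℓ)
    (hlcap : ∀ B ∈ 𝓑, ∀ Δ ∈ 𝓒, (B ∩ Δ).Nonempty → (B ∩ Δ).card = ℓ)
    (hl : ℓ = 2)
    : ∀ Δ ∈ 𝓒, ∀ α ∈ Δ, ∀ β ∈ Δ, ∀ α' ∈ Δ, ∀ β' ∈ Δ, α ≠ β → α' ≠ β' →
        ∃ g ∈ G, Δ.image ⇑g = Δ ∧ g α = α' ∧ g β = β' := by
  subst hl
  exact fun Δ hΔ ↦ exists_perm_of_isMultiplyPretransitive_two <|
    stmt_9_general (isFlagTransitive_coe_image hflag) (isBlock_coe_of_mem hpart hGC hΔ)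
      (fun _ _ _ _ ↦ exists_joining_block hlam1 hpairs)
      (encard_inter_coe_le fun B hB ↦ hlcap B hB Δ hΔ)
end

section
/- Assume Hypothesis (H) with ℓ ≥ 3, let Δ ∈ C and let α, β be distinct points of Δ. Then the setwise stabilizer L_{{α,β}} of {α,β} in L = (G_Δ)^Δ has an orbit in Δ \ {α,β} of size at most (ℓ−2)λ. In particular, if c > 2 + (ℓ−2)λ then L is not 3-transitive on Δ. -/
/-!
The blocks through two points `α, β` of a class `Δ` meet `Δ` in at most `(ℓ - 2) * λ` further
points. The set of these points is attached canonically to the blocks, `Δ` and `{α, β}`, so the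
stabilizer of `Δ` and `{α, β}` preserves it, and any orbit inside it is small. If the group were
3-transitive on `Δ`, that orbit would be all of `Δ \ {α, β}`.
-/

section Support

variable {Ω : Type*} [DecidableEq Ω] {𝓑 : Finset (Finset Ω)} {B Δ T : Finset Ω} {ℓ : ℕ}

/-- The points of `Δ` outside `T` that lie on a member of `𝓑` containing `T`. In design-theoretic
terms, it is the union of the traces on `Δ` of the blocks of the derived design at `T`. -/
def derivedSupport (𝓑 : Finset (Finset Ω)) (Δ T : Finset Ω) : Finset Ω :=
  {B ∈ 𝓑 | T ⊆ B}.biUnion fun B => (B ∩ Δ) \ T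

theorem mem_derivedSupport {x : Ω} :
    x ∈ derivedSupport 𝓑 Δ T ↔ ∃ B ∈ 𝓑, T ⊆ B ∧ x ∈ B ∧ x ∈ Δ ∧ x ∉ T := by
  simp [derivedSupport, and_assoc]

theorem derivedSupport_subset_sdiff : derivedSupport 𝓑 Δ T ⊆ Δ \ T :=
  Finset.biUnion_subset.2 fun _ _ => Finset.sdiff_subset_sdiff Finset.inter_subset_right subset_rfl

theorem card_derivedSupport_le (hT : T ⊆ Δ) (hcap : ∀ B ∈ 𝓑, T ⊆ B → (B ∩ Δ).card ≤ ℓ) :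
    (derivedSupport 𝓑 Δ T).card ≤ (ℓ - T.card) * {B ∈ 𝓑 | T ⊆ B}.card := by
  rw [mul_comm]
  refine Finset.card_biUnion_le_card_mul _ _ _ fun B hB => ?_
  obtain ⟨hB, hTB⟩ := Finset.mem_filter.1 hB
  rw [Finset.card_sdiff_of_subset (Finset.subset_inter hTB hT)]
  exact Nat.sub_le_sub_right (hcap B hB hTB) _

theorem derivedSupport_nonempty (hB : B ∈ 𝓑) (hTB : T ⊆ B) (hlt : T.card < (B ∩ Δ).card) :
    (derivedSupport 𝓑 Δ T).Nonempty := by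
  obtain ⟨x, hx, hxT⟩ := Finset.exists_mem_notMem_of_card_lt_card hlt
  obtain ⟨hxB, hxΔ⟩ := Finset.mem_inter.1 hx
  exact ⟨x, mem_derivedSupport.2 ⟨B, hB, hTB, hxB, hxΔ, hxT⟩⟩

end Support

section Orbits

open MulAction
open scoped Pointwise

variable {G Ω : Type*} [Group G] [MulAction G Ω] {K : Subgroup G} {O A : Finset Ω} {γ x y : Ω}

theorem exists_coe_eq_orbit_of_le_stabilizer [DecidableEq Ω] (hA : A.Nonempty)
    (hK : K ≤ stabilizer G A) : ∃ O ⊆ A, ∃ γ ∈ O, (O : Set Ω) = orbit K γ := by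
  obtain ⟨γ, hγ⟩ := hA
  have horbit : orbit K γ ⊆ A := by
    rintro _ ⟨g, rfl⟩
    exact mem_stabilizer_finset'.1 (hK g.2) hγ
  lift orbit K γ to Finset Ω using A.finite_toSet.subset horbit with O hO
  exact ⟨O, Finset.coe_subset.1 horbit, γ, by simp [← Finset.mem_coe, hO], hO⟩

theorem le_stabilizer_of_coe_eq_orbit [DecidableEq Ω] (hO : (O : Set Ω) = orbit K γ) :
    K ≤ stabilizer G O := fun g hg => by
  rw [mem_stabilizer_iff, ← Finset.coe_inj, Finset.coe_smul_finset, hO]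
  exact smul_orbit (⟨g, hg⟩ : K) γ

theorem exists_smul_eq_of_coe_eq_orbit (hO : (O : Set Ω) = orbit K γ) (hx : x ∈ O)
    (hy : y ∈ O) : ∃ g ∈ K, g • x = y := by
  rw [← Finset.mem_coe, hO, ← orbit_eq_iff] at hx hy
  obtain ⟨g, hg⟩ := orbit_eq_iff.1 (hy.trans hx.symm)
  exact ⟨g, g.2, hg⟩

theorem subset_of_le_stabilizer_of_transitive [DecidableEq Ω] (hO : K ≤ stabilizer G O)
    (hne : O.Nonempty) (hOA : O ⊆ A) (htrans : ∀ x ∈ A, ∀ y ∈ A, ∃ g ∈ K, g • x = y) :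
    A ⊆ O := by
  obtain ⟨x, hx⟩ := hne
  intro y hy
  obtain ⟨g, hg, rfl⟩ := htrans x (hOA hx) y hy
  exact mem_stabilizer_finset'.1 (hO hg) hx

end Orbits

section Stabilizer

open MulAction
open scoped Pointwise

variable {G Ω : Type*} [Group G] [MulAction G Ω] [DecidableEq Ω] {H K : Subgroup G}
  {𝓑 : Finset (Finset Ω)} {Δ T : Finset Ω} {α β γ δ : Ω}

theorem le_stabilizer_derivedSupport (h𝓑 : K ≤ stabilizer G 𝓑) (hΔ : K ≤ stabilizer G Δ)
    (hT : K ≤ stabilizer G T) : K ≤ stabilizer G (derivedSupport 𝓑 Δ T) := fun g hg => by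
  rw [mem_stabilizer_finset']
  intro x hx
  obtain ⟨B, hB, hTB, hxB, hxΔ, hxT⟩ := mem_derivedSupport.1 hx
  refine mem_derivedSupport.2 ⟨g • B, mem_stabilizer_finset'.1 (h𝓑 hg) hB, ?_,
    Finset.smul_mem_smul_finset hxB, mem_stabilizer_finset'.1 (hΔ hg) hxΔ, ?_⟩
  · rw [← hT hg]
    exact Finset.smul_finset_subset_smul_finset hTB
  · rwa [mem_stabilizer_finset.1 (hT hg)]

/-- The subgroup of `H` preserving both `Δ` and `T` setwise. For `T ⊆ Δ` it induces on `Δ` the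
setwise stabilizer of `T` in the permutation group induced by the stabilizer of `Δ`. -/
def setwiseStabilizer (H : Subgroup G) (Δ T : Finset Ω) : Subgroup G :=
  H ⊓ stabilizer G Δ ⊓ stabilizer G T

theorem mem_setwiseStabilizer {g : G} :
    g ∈ setwiseStabilizer H Δ T ↔ g ∈ H ∧ g • Δ = Δ ∧ g • T = T := by
  simp [setwiseStabilizer, Subgroup.mem_inf, and_assoc]

theorem setwiseStabilizer_le_stabilizer_derivedSupport (hH : ∀ g ∈ H, ∀ B ∈ 𝓑, g • B ∈ 𝓑) :
    setwiseStabilizer H Δ T ≤ stabilizer G (derivedSupport 𝓑 Δ T) :=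
  le_stabilizer_derivedSupport
    ((inf_le_left.trans inf_le_left).trans fun g hg => mem_stabilizer_finset'.2 (hH g hg))
    (inf_le_left.trans inf_le_right) inf_le_right

theorem exists_mem_setwiseStabilizer_pair_smul_eq (hα : α ∈ Δ) (hβ : β ∈ Δ) (hαβ : α ≠ β)
    (h3 : ∀ x ∈ Δ, ∀ y ∈ Δ, ∀ z ∈ Δ, ∀ x' ∈ Δ, ∀ y' ∈ Δ, ∀ z' ∈ Δ,
      x ≠ y → x ≠ z → y ≠ z → x' ≠ y' → x' ≠ z' → y' ≠ z' →
      ∃ g ∈ H, g • Δ = Δ ∧ g • x = x' ∧ g • y = y' ∧ g • z = z')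
    (hγ : γ ∈ Δ \ {α, β}) (hδ : δ ∈ Δ \ {α, β}) :
    ∃ g ∈ setwiseStabilizer H Δ {α, β}, g • γ = δ := by
  simp only [Finset.mem_sdiff, Finset.mem_insert, Finset.mem_singleton, not_or] at hγ hδ
  obtain ⟨hγΔ, hγα, hγβ⟩ := hγ
  obtain ⟨hδΔ, hδα, hδβ⟩ := hδ
  obtain ⟨g, hg, hgΔ, hgα, hgβ, hgγ⟩ := h3 α hα β hβ γ hγΔ α hα β hβ δ hδΔ
    hαβ (Ne.symm hγα) (Ne.symm hγβ) hαβ (Ne.symm hδα) (Ne.symm hδβ)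
  have hgpair : g • ({α, β} : Finset Ω) = {α, β} := by
    rw [Finset.smul_finset_insert, Finset.smul_finset_singleton, hgα, hgβ]
  exact ⟨g, mem_setwiseStabilizer.2 ⟨hg, hgΔ, hgpair⟩, hgγ⟩

theorem stmt_10_general {lam ℓ : ℕ} (hα : α ∈ Δ) (hβ : β ∈ Δ) (hαβ : α ≠ β) (hlam : 1 ≤ lam)
    (hpair : (𝓑.filter fun B => α ∈ B ∧ β ∈ B).card = lam)
    (hH : ∀ g ∈ H, ∀ B ∈ 𝓑, g • B ∈ 𝓑)
    (hcap : ∀ B ∈ 𝓑, α ∈ B → β ∈ B → (B ∩ Δ).card ∈ Set.Icc 3 ℓ) :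
    (∃ O : Finset Ω, O.Nonempty ∧ O ⊆ Δ \ {α, β} ∧ O.card ≤ (ℓ - 2) * lam ∧
      (∀ g ∈ H, g • Δ = Δ → g • ({α, β} : Finset Ω) = {α, β} → g • O = O) ∧
      (∀ γ ∈ O, ∀ γ' ∈ O, ∃ g ∈ H, g • Δ = Δ ∧ g • ({α, β} : Finset Ω) = {α, β} ∧
        g • γ = γ')) ∧
    (2 + (ℓ - 2) * lam < Δ.card →
      ¬ (∀ x ∈ Δ, ∀ y ∈ Δ, ∀ z ∈ Δ, ∀ x' ∈ Δ, ∀ y' ∈ Δ, ∀ z' ∈ Δ,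
        x ≠ y → x ≠ z → y ≠ z → x' ≠ y' → x' ≠ z' → y' ≠ z' →
        ∃ g ∈ H, g • Δ = Δ ∧ g • x = x' ∧ g • y = y' ∧ g • z = z')) := by
  have pair_subset_iff {S : Finset Ω} : {α, β} ⊆ S ↔ α ∈ S ∧ β ∈ S := by
    rw [Finset.insert_subset_iff, Finset.singleton_subset_iff]
  have hpairΔ : {α, β} ⊆ Δ := pair_subset_iff.2 ⟨hα, hβ⟩
  have hcard : (derivedSupport 𝓑 Δ {α, β}).card ≤ (ℓ - 2) * lam := by
    have hcapΔ (B) (hB : B ∈ 𝓑) (hpairB : {α, β} ⊆ B) : (B ∩ Δ).card ≤ ℓ :=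
      have ⟨hαB, hβB⟩ := pair_subset_iff.1 hpairB
      (hcap B hB hαB hβB).2
    simpa only [Finset.card_pair hαβ, pair_subset_iff, hpair] using
      card_derivedSupport_le hpairΔ hcapΔ
  have hne : (derivedSupport 𝓑 Δ {α, β}).Nonempty := by
    obtain ⟨B, hB⟩ := Finset.card_pos.1 (hpair ▸ hlam)
    obtain ⟨hB, hαB, hβB⟩ := Finset.mem_filter.1 hB
    refine derivedSupport_nonempty hB (pair_subset_iff.2 ⟨hαB, hβB⟩) ?_
    exact (Finset.card_pair hαβ).trans_lt (hcap B hB hαB hβB).1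
  have hinv := setwiseStabilizer_le_stabilizer_derivedSupport (Δ := Δ) (T := {α, β}) hH
  constructor
  · obtain ⟨O, hO, γ, hγ, hOγ⟩ := exists_coe_eq_orbit_of_le_stabilizer hne hinv
    refine ⟨O, ⟨γ, hγ⟩, hO.trans derivedSupport_subset_sdiff, (Finset.card_le_card hO).trans hcard,
      fun g hg hgΔ hgpair => le_stabilizer_of_coe_eq_orbit hOγ
        (mem_setwiseStabilizer.2 ⟨hg, hgΔ, hgpair⟩), fun x hx y hy => ?_⟩
    simpa only [mem_setwiseStabilizer, and_assoc] using exists_smul_eq_of_coe_eq_orbit hOγ hx hy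
  · intro hlt h3
    have hsub := subset_of_le_stabilizer_of_transitive hinv hne derivedSupport_subset_sdiff
      fun _ hx _ hy => exists_mem_setwiseStabilizer_pair_smul_eq hα hβ hαβ h3 hx hy
    have hle := (Finset.card_le_card hsub).trans hcard
    rw [Finset.card_sdiff_of_subset hpairΔ, Finset.card_pair hαβ] at hle
    lia

end Stabilizer

theorem stmt_10
    {Ω : Type*} [Fintype Ω] [DecidableEq Ω]
    (v k lam c d ℓ : ℕ)
    (𝓑 𝓒 : Finset (Finset Ω))
    (G : Subgroup (Equiv.Perm Ω))
    (hv : Fintype.card Ω = v)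
    (hlam1 : 1 ≤ lam)
    (hkcard : ∀ B ∈ 𝓑, B.card = k)
    (hpairs : ∀ α β : Ω, α ≠ β → (𝓑.filter (fun B => α ∈ B ∧ β ∈ B)).card = lam)
    (hk2 : 2 < k) (hkv : k < v)
    (hGB : ∀ g ∈ G, ∀ B ∈ 𝓑, B.image ⇑g ∈ 𝓑)
    (hflag : ∀ B₁ ∈ 𝓑, ∀ B₂ ∈ 𝓑, ∀ α₁ ∈ B₁, ∀ α₂ ∈ B₂,
        ∃ g ∈ G, B₁.image ⇑g = B₂ ∧ g α₁ = α₂)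
    (hpart : ∀ ω : Ω, ∃! Δ, Δ ∈ 𝓒 ∧ ω ∈ Δ)
    (hdcard : 𝓒.card = d) (hd2 : 2 ≤ d)
    (hccard : ∀ Δ ∈ 𝓒, Δ.card = c) (hc2 : 2 ≤ c)
    (hGC : ∀ g ∈ G, ∀ Δ ∈ 𝓒, Δ.image ⇑g ∈ 𝓒)
    (hl2 : 2 ≤ ℓ)
    (hlcap : ∀ B ∈ 𝓑, ∀ Δ ∈ 𝓒, (B ∩ Δ).Nonempty → (B ∩ Δ).card = ℓ)
    (hl3 : 3 ≤ ℓ)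
    (Δ : Finset Ω) (hΔ : Δ ∈ 𝓒) (α β : Ω) (hα : α ∈ Δ) (hβ : β ∈ Δ) (hαβ : α ≠ β)
    : -- L_{α,β} has an orbit in Δ \ {α,β} of size at most (ℓ-2)λ
      (∃ O : Finset Ω, O.Nonempty ∧ O ⊆ Δ \ {α, β} ∧ O.card ≤ (ℓ - 2) * lam ∧
        (∀ g ∈ G, Δ.image ⇑g = Δ → ({α, β} : Finset Ω).image ⇑g = {α, β} → O.image ⇑g = O) ∧
        (∀ γ ∈ O, ∀ γ' ∈ O, ∃ g ∈ G, Δ.image ⇑g = Δ ∧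
          ({α, β} : Finset Ω).image ⇑g = {α, β} ∧ g γ = γ')) ∧
      -- if c > 2 + (ℓ-2)λ then L is not 3-transitive on Δ
      (2 + (ℓ - 2) * lam < c →
        ¬ (∀ x ∈ Δ, ∀ y ∈ Δ, ∀ z ∈ Δ, ∀ x' ∈ Δ, ∀ y' ∈ Δ, ∀ z' ∈ Δ,
            x ≠ y → x ≠ z → y ≠ z → x' ≠ y' → x' ≠ z' → y' ≠ z' →
            ∃ g ∈ G, Δ.image ⇑g = Δ ∧ g x = x' ∧ g y = y' ∧ g z = z')) := by
  exact hccard Δ hΔ ▸ stmt_10_general hα hβ hαβ hlam1 (hpairs α β hαβ) hGB fun B hB hαB _ => by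
    simp [hlcap B hB Δ hΔ ⟨α, Finset.mem_inter.2 ⟨hαB, hα⟩⟩, hl3]
end

section
/- Assume Hypothesis (H), and suppose p is a prime dividing |G| such that p does not divide λ. Suppose a nontrivial p-subgroup P ≤ G fixes two distinct points α, β, and let Δ ∈ C be the class containing α. Then P fixes setwise at least one block B containing {α,β}, and hence P leaves invariant the ℓ-subset B ∩ Δ of Δ and the (k/ℓ)-subset C(B) = {Δ' ∈ C : B ∩ Δ' ≠ ∅} of C. -/
/-!
A `p`-group acting on a finite set of size prime to `p` has a fixed point. The `λ` blocks through
two fixed points `α` and `β` form such a set, so some block `B` among them is fixed. The class of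
the fixed point `α` is fixed as well, because distinct classes are disjoint; hence so are the trace
of `B` on it and the set of classes that `B` meets.
-/

section PGroup

variable {P X : Type*} [Group P] [MulAction P X] {p : ℕ}

theorem exists_mem_forall_smul_eq_of_not_dvd_ncard (hp : p.Prime) (hP : IsPGroup p P) {S : Set X}
    (hS : ∀ g : P, ∀ x ∈ S, g • x ∈ S) (hcard : ¬ p ∣ S.ncard) :
    ∃ x ∈ S, ∀ g : P, g • x = x := by
  have : Fact p.Prime := ⟨hp⟩
  let S' : SubMulAction P X := ⟨S, fun g {x} hx => hS g x hx⟩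
  obtain ⟨x, hx⟩ := hP.nonempty_fixed_point_of_prime_not_dvd_card S' hcard
  exact ⟨x, x.2, fun g => congrArg Subtype.val (hx g)⟩

end PGroup

theorem pairwiseDisjoint_id_of_forall_existsUnique {Ω : Type*} {𝓒 : Set (Finset Ω)}
    (h : ∀ ω, ∃! Δ, Δ ∈ 𝓒 ∧ ω ∈ Δ) : 𝓒.PairwiseDisjoint id :=
  fun _ h₁ _ h₂ hne => Finset.disjoint_left.2 fun ω hω₁ hω₂ =>
    hne ((h ω).unique ⟨h₁, hω₁⟩ ⟨h₂, hω₂⟩)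

section Action

open scoped Pointwise

theorem smul_eq_of_pairwiseDisjoint_of_mem {Ω P : Type*} [DecidableEq Ω] [SMul P Ω]
    {𝓒 : Set (Finset Ω)} (hdisj : 𝓒.PairwiseDisjoint id) {g : P} {Δ : Finset Ω} (hΔ : Δ ∈ 𝓒)
    (hgΔ : g • Δ ∈ 𝓒) {α : Ω} (hα : α ∈ Δ) (hfix : g • α = α) : g • Δ = Δ :=
  hdisj.elim_finset hgΔ hΔ α (hfix ▸ Finset.smul_mem_smul_finset hα) hα

variable {Ω P : Type*} [DecidableEq Ω] [Group P] [MulAction P Ω]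

theorem exists_superset_forall_smul_eq_of_not_dvd_ncard {p : ℕ} (hp : p.Prime) (hP : IsPGroup p P)
    {𝓑 : Set (Finset Ω)} (h𝓑 : ∀ g : P, ∀ B ∈ 𝓑, g • B ∈ 𝓑)
    {F : Finset Ω} (hF : ∀ g : P, g • F = F) (hcard : ¬ p ∣ {B ∈ 𝓑 | F ⊆ B}.ncard) :
    ∃ B ∈ 𝓑, F ⊆ B ∧ ∀ g : P, g • B = B := by
  have hinv : ∀ g : P, ∀ B ∈ {B ∈ 𝓑 | F ⊆ B}, g • B ∈ {B ∈ 𝓑 | F ⊆ B} := fun g B hB =>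
    ⟨h𝓑 g B hB.1, (hF g).superset.trans (Finset.smul_finset_subset_smul_finset hB.2)⟩
  obtain ⟨B, ⟨hB, hFB⟩, hfix⟩ := exists_mem_forall_smul_eq_of_not_dvd_ncard hp hP hinv hcard
  exact ⟨B, hB, hFB, hfix⟩

theorem inter_smul_nonempty_iff_of_smul_eq {g : P} {B : Finset Ω} (hB : g • B = B)
    (A : Finset Ω) : (B ∩ g • A).Nonempty ↔ (B ∩ A).Nonempty := by
  rw [← Finset.smul_finset_nonempty (a := g) (s := B ∩ A), Finset.smul_finset_inter, hB]

theorem stmt_11_general {p : ℕ} (hp : p.Prime) (hP : IsPGroup p P)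
    {𝓑 𝓒 : Set (Finset Ω)}
    (h𝓑 : ∀ g : P, ∀ B ∈ 𝓑, g • B ∈ 𝓑)
    (h𝓒 : ∀ g : P, ∀ Δ ∈ 𝓒, g • Δ ∈ 𝓒) (hdisj : 𝓒.PairwiseDisjoint id)
    {α β : Ω} (hcard : ¬ p ∣ {B ∈ 𝓑 | α ∈ B ∧ β ∈ B}.ncard)
    (hfix : ∀ g : P, g • α = α ∧ g • β = β)
    {Δ : Finset Ω} (hΔ : Δ ∈ 𝓒) (hαΔ : α ∈ Δ) :
    ∃ B ∈ 𝓑, α ∈ B ∧ β ∈ B ∧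
      (∀ g : P, g • B = B) ∧
      (∀ g : P, g • (B ∩ Δ) = B ∩ Δ) ∧
      (∀ g : P, ∀ Δ' ∈ 𝓒, ((B ∩ Δ').Nonempty ↔ (B ∩ g • Δ').Nonempty)) := by
  have hpair : ∀ g : P, g • ({α, β} : Finset Ω) = {α, β} := fun g => by
    simp [Finset.smul_finset_insert, hfix g]
  have hsub : ∀ B : Finset Ω, {α, β} ⊆ B ↔ α ∈ B ∧ β ∈ B := fun B => by
    simp [Finset.insert_subset_iff]
  obtain ⟨B, hB, hαβB, hfixB⟩ := exists_superset_forall_smul_eq_of_not_dvd_ncard hp hP h𝓑 hpair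
    (by simpa only [hsub] using hcard)
  obtain ⟨hαB, hβB⟩ := (hsub B).1 hαβB
  have hfixΔ (g : P) : g • Δ = Δ :=
    smul_eq_of_pairwiseDisjoint_of_mem hdisj hΔ (h𝓒 g Δ hΔ) hαΔ (hfix g).1
  exact ⟨B, hB, hαB, hβB, hfixB, fun g => by rw [Finset.smul_finset_inter, hfixB, hfixΔ],
    fun g Δ' _ => (inter_smul_nonempty_iff_of_smul_eq (hfixB g) Δ').symm⟩

end Action

theorem stmt_11
    {Ω : Type*} [Fintype Ω] [DecidableEq Ω]
    (v k lam c d ℓ : ℕ)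
    (𝓑 𝓒 : Finset (Finset Ω))
    (G : Subgroup (Equiv.Perm Ω))
    (hv : Fintype.card Ω = v)
    (hlam1 : 1 ≤ lam)
    (hkcard : ∀ B ∈ 𝓑, B.card = k)
    (hpairs : ∀ α β : Ω, α ≠ β → (𝓑.filter (fun B => α ∈ B ∧ β ∈ B)).card = lam)
    (hk2 : 2 < k) (hkv : k < v)
    (hGB : ∀ g ∈ G, ∀ B ∈ 𝓑, B.image ⇑g ∈ 𝓑)
    (hflag : ∀ B₁ ∈ 𝓑, ∀ B₂ ∈ 𝓑, ∀ α₁ ∈ B₁, ∀ α₂ ∈ B₂,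
        ∃ g ∈ G, B₁.image ⇑g = B₂ ∧ g α₁ = α₂)
    (hpart : ∀ ω : Ω, ∃! Δ, Δ ∈ 𝓒 ∧ ω ∈ Δ)
    (hdcard : 𝓒.card = d) (hd2 : 2 ≤ d)
    (hccard : ∀ Δ ∈ 𝓒, Δ.card = c) (hc2 : 2 ≤ c)
    (hGC : ∀ g ∈ G, ∀ Δ ∈ 𝓒, Δ.image ⇑g ∈ 𝓒)
    (hl2 : 2 ≤ ℓ)
    (hlcap : ∀ B ∈ 𝓑, ∀ Δ ∈ 𝓒, (B ∩ Δ).Nonempty → (B ∩ Δ).card = ℓ)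
    (p : ℕ) (hp : p.Prime) (hpG : p ∣ Nat.card ↥G) (hplam : ¬ p ∣ lam)
    (Q : Subgroup (Equiv.Perm Ω)) (hQG : Q ≤ G) (hQp : IsPGroup p ↥Q) (hQnt : Q ≠ ⊥)
    (α β : Ω) (hαβ : α ≠ β)
    (hfix : ∀ g ∈ Q, g α = α ∧ g β = β)
    (Δ : Finset Ω) (hΔ : Δ ∈ 𝓒) (hαΔ : α ∈ Δ)
    : ∃ B ∈ 𝓑, α ∈ B ∧ β ∈ B ∧
      (∀ g ∈ Q, B.image ⇑g = B) ∧
      (∀ g ∈ Q, (B ∩ Δ).image ⇑g = B ∩ Δ) ∧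
      (∀ g ∈ Q, ∀ Δ' ∈ 𝓒, ((B ∩ Δ').Nonempty ↔ (B ∩ Δ'.image ⇑g).Nonempty)) := by
  -- `using!` unfolds `g • B` to `B.image ⇑g`.
  simpa only [Subtype.forall] using! stmt_11_general (P := Q) (𝓑 := 𝓑) (𝓒 := 𝓒) hp hQp
    (fun g => hGB g (hQG g.2)) (fun g => hGC g (hQG g.2))
    (pairwiseDisjoint_id_of_forall_existsUnique hpart)
    (by simpa [← hpairs α β hαβ, ← Set.ncard_coe_finset] using hplam)
    (fun g => hfix g g.2) hΔ hαΔ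
end

section
/- Assume Hypothesis (H) and let Δ ∈ C. Then there exists a positive integer θ dividing λ such that for every nonempty set of the form B ∩ Δ with B ∈ B, the number of blocks B' ∈ B with B' ∩ Δ = B ∩ Δ equals θ, and every pair of distinct points of Δ lies in exactly λ/θ distinct ℓ-subsets of Δ of the form B ∩ Δ (B ∈ B); that is, the induced incidence structure D(Δ) on Δ, with blocks the nonempty intersections B ∩ Δ counted with multiplicity, is a 2-(c, ℓ, λ) design with constant block multiplicity θ. -/
/-!
If two blocks meet `Δ`, an element of `G` taking a flag of the first with its point in `Δ` to such
a flag of the second maps `Δ` to itself, because `Δ` is a block of imprimitivity. It therefore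
carries the blocks with the first trace bijectively to the blocks with the second, so all nonempty
traces have the same multiplicity `θ`. The `lam` blocks through a pair in `Δ` are then partitioned
by their traces into fibres of size `θ`.
-/

section

open Finset MulAction
open scoped Pointwise

variable {Ω : Type*} [DecidableEq Ω]

/-- The number of blocks in `𝓑` whose trace `B ∩ Δ` is `T`: the multiplicity of `T` as a block of
the incidence structure `𝓑` induces on `Δ`. -/
def traceMultiplicity (𝓑 : Finset (Finset Ω)) (Δ T : Finset Ω) : ℕ :=
  #{B ∈ 𝓑 | B ∩ Δ = T}

theorem traceMultiplicity_inter_pos {𝓑 : Finset (Finset Ω)} {B : Finset Ω} (hB : B ∈ 𝓑)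
    (Δ : Finset Ω) : 0 < traceMultiplicity 𝓑 Δ (B ∩ Δ) :=
  card_pos.mpr ⟨B, mem_filter.mpr ⟨hB, rfl⟩⟩

theorem card_filter_subset_eq_card_image_inter_mul {𝓑 : Finset (Finset Ω)} {Δ S : Finset Ω} {θ : ℕ}
    (hθ : ∀ B ∈ 𝓑, (B ∩ Δ).Nonempty → traceMultiplicity 𝓑 Δ (B ∩ Δ) = θ)
    (hSΔ : S ⊆ Δ) (hS : S.Nonempty) :
    #{B ∈ 𝓑 | S ⊆ B} = #({B ∈ 𝓑 | S ⊆ B}.image (· ∩ Δ)) * θ := by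
  rw [card_eq_sum_card_image (· ∩ Δ)]
  refine sum_const_nat fun T hT => ?_
  obtain ⟨B, hB, rfl⟩ := mem_image.mp hT
  obtain ⟨hB, hSB⟩ := mem_filter.mp hB
  have hSB' : ∀ B' ∈ 𝓑, B' ∩ Δ = B ∩ Δ → S ⊆ B' := fun B' _ h =>
    (h ▸ subset_inter hSB hSΔ : S ⊆ B' ∩ Δ).trans inter_subset_left
  rw [← hθ B hB (hS.mono (subset_inter hSB hSΔ)), traceMultiplicity, filter_filter]
  exact congrArg card (filter_congr fun B' hB' => and_iff_right_of_imp (hSB' B' hB'))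

section GroupAction

variable {G : Type*} [Group G] [MulAction G Ω]

theorem traceMultiplicity_smul (g : G) (𝓑 : Finset (Finset Ω)) (Δ T : Finset Ω) :
    traceMultiplicity (g • 𝓑) (g • Δ) (g • T) = traceMultiplicity 𝓑 Δ T := by
  rw [traceMultiplicity, smul_finset_def (s := 𝓑), filter_image,
    card_image_of_injective _ (MulAction.injective g)]
  simp only [← smul_finset_inter, smul_left_cancel_iff, traceMultiplicity]

theorem isBlock_of_existsUnique_mem {𝓒 : Finset (Finset Ω)} {Δ : Finset Ω} (hΔ : Δ ∈ 𝓒)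
    (hG : ∀ g : G, g • Δ ∈ 𝓒) (hpart : ∀ α ∈ Δ, ∃! Δ', Δ' ∈ 𝓒 ∧ α ∈ Δ') :
    IsBlock G (Δ : Set Ω) := by
  refine isBlock_iff_smul_eq_of_mem.mpr fun g α hα hgα => ?_
  have hgΔ : g • Δ = Δ :=
    (hpart (g • α) hgα).unique ⟨hG g, smul_mem_smul_finset hα⟩ ⟨hΔ, hgα⟩
  rw [← coe_smul_finset, hgΔ]

variable (G) in
/-- `G` acts by automorphisms on the incidence structure with block set `𝓑`, transitively on the
flags `(α, B)`, `α ∈ B ∈ 𝓑`. -/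
structure IsFlagTransitive_s14 (𝓑 : Finset (Finset Ω)) : Prop where
  smul_mem : ∀ g : G, ∀ B ∈ 𝓑, g • B ∈ 𝓑
  exists_smul_eq : ∀ B₁ ∈ 𝓑, ∀ B₂ ∈ 𝓑, ∀ α₁ ∈ B₁, ∀ α₂ ∈ B₂,
    ∃ g : G, g • B₁ = B₂ ∧ g • α₁ = α₂

namespace IsFlagTransitive_s14

variable {𝓑 : Finset (Finset Ω)} {Δ : Finset Ω}

theorem smul_eq (h𝓑 : IsFlagTransitive_s14 G 𝓑) (g : G) : g • 𝓑 = 𝓑 :=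
  mem_stabilizer_iff.mp (mem_stabilizer_finset'.mpr (h𝓑.smul_mem g))

theorem traceMultiplicity_inter_eq (h𝓑 : IsFlagTransitive_s14 G 𝓑) (hΔ : IsBlock G (Δ : Set Ω))
    {B₁ B₂ : Finset Ω} (hB₁ : B₁ ∈ 𝓑) (hB₂ : B₂ ∈ 𝓑)
    (hne₁ : (B₁ ∩ Δ).Nonempty) (hne₂ : (B₂ ∩ Δ).Nonempty) :
    traceMultiplicity 𝓑 Δ (B₁ ∩ Δ) = traceMultiplicity 𝓑 Δ (B₂ ∩ Δ) := by
  obtain ⟨α₁, hα₁⟩ := hne₁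
  obtain ⟨α₂, hα₂⟩ := hne₂
  rw [mem_inter] at hα₁ hα₂
  obtain ⟨g, rfl, rfl⟩ := h𝓑.exists_smul_eq B₁ hB₁ B₂ hB₂ α₁ hα₁.1 α₂ hα₂.1
  have hgΔ : g • Δ = Δ := by
    exact_mod_cast isBlock_iff_smul_eq_of_mem.mp hΔ hα₁.2 hα₂.2
  rw [← traceMultiplicity_smul g, h𝓑.smul_eq, smul_finset_inter, hgΔ]

theorem exists_traceMultiplicity_eq (h𝓑 : IsFlagTransitive_s14 G 𝓑) (hΔ : IsBlock G (Δ : Set Ω)) :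
    ∃ θ : ℕ, 0 < θ ∧
      ∀ B ∈ 𝓑, (B ∩ Δ).Nonempty → traceMultiplicity 𝓑 Δ (B ∩ Δ) = θ := by
  by_cases hmeet : ∃ B₀ ∈ 𝓑, (B₀ ∩ Δ).Nonempty
  · obtain ⟨B₀, hB₀, hne₀⟩ := hmeet
    exact ⟨_, traceMultiplicity_inter_pos hB₀ Δ,
      fun B hB hne => h𝓑.traceMultiplicity_inter_eq hΔ hB hB₀ hne hne₀⟩
  · exact ⟨1, one_pos, fun B hB hne => absurd ⟨B, hB, hne⟩ hmeet⟩

end IsFlagTransitive_s14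

theorem stmt_14_general {𝓑 : Finset (Finset Ω)} {Δ : Finset Ω} {lam : ℕ}
    (h𝓑 : IsFlagTransitive_s14 G 𝓑) (hΔ : IsBlock G (Δ : Set Ω)) (hnontrivial : Δ.Nontrivial)
    (hpairs : ∀ α ∈ Δ, ∀ β ∈ Δ, α ≠ β → #{B ∈ 𝓑 | α ∈ B ∧ β ∈ B} = lam) :
    ∃ θ : ℕ, 0 < θ ∧ θ ∣ lam ∧
      (∀ B ∈ 𝓑, (B ∩ Δ).Nonempty → traceMultiplicity 𝓑 Δ (B ∩ Δ) = θ) ∧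
      (∀ α ∈ Δ, ∀ β ∈ Δ, α ≠ β → #({B ∈ 𝓑 | α ∈ B ∧ β ∈ B}.image (· ∩ Δ)) = lam / θ) := by
  obtain ⟨θ, hθpos, hθ⟩ := h𝓑.exists_traceMultiplicity_eq hΔ
  have hcount : ∀ α ∈ Δ, ∀ β ∈ Δ, α ≠ β →
      lam = #({B ∈ 𝓑 | α ∈ B ∧ β ∈ B}.image (· ∩ Δ)) * θ := by
    intro α hα β hβ hne
    simpa only [insert_subset_iff, singleton_subset_iff, hpairs α hα β hβ hne] using
      card_filter_subset_eq_card_image_inter_mul (S := {α, β}) hθ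
        (insert_subset hα (singleton_subset_iff.mpr hβ)) (insert_nonempty α {β})
  obtain ⟨α, hα, β, hβ, hne⟩ := hnontrivial
  exact ⟨θ, hθpos, Dvd.intro_left _ (hcount α hα β hβ hne).symm, hθ, fun α hα β hβ hne =>
    (Nat.div_eq_of_eq_mul_left hθpos (hcount α hα β hβ hne)).symm⟩

end GroupAction

theorem isFlagTransitive_subgroup_perm {G : Subgroup (Equiv.Perm Ω)} {𝓑 : Finset (Finset Ω)}
    (hG𝓑 : ∀ g ∈ G, ∀ B ∈ 𝓑, B.image ⇑g ∈ 𝓑)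
    (hflag : ∀ B₁ ∈ 𝓑, ∀ B₂ ∈ 𝓑, ∀ α₁ ∈ B₁, ∀ α₂ ∈ B₂,
      ∃ g ∈ G, B₁.image ⇑g = B₂ ∧ g α₁ = α₂) :
    IsFlagTransitive_s14 G 𝓑 where
  smul_mem g := hG𝓑 g g.2
  exists_smul_eq B₁ hB₁ B₂ hB₂ α₁ hα₁ α₂ hα₂ :=
    let ⟨g, hg, hgB, hgα⟩ := hflag B₁ hB₁ B₂ hB₂ α₁ hα₁ α₂ hα₂
    ⟨⟨g, hg⟩, hgB, hgα⟩

end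

theorem stmt_14
    {Ω : Type*} [Fintype Ω] [DecidableEq Ω]
    (v k lam c d ℓ : ℕ)
    (𝓑 𝓒 : Finset (Finset Ω))
    (G : Subgroup (Equiv.Perm Ω))
    (hv : Fintype.card Ω = v)
    (hlam1 : 1 ≤ lam)
    (hkcard : ∀ B ∈ 𝓑, B.card = k)
    (hpairs : ∀ α β : Ω, α ≠ β → (𝓑.filter (fun B => α ∈ B ∧ β ∈ B)).card = lam)
    (hk2 : 2 < k) (hkv : k < v)
    (hGB : ∀ g ∈ G, ∀ B ∈ 𝓑, B.image ⇑g ∈ 𝓑)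
    (hflag : ∀ B₁ ∈ 𝓑, ∀ B₂ ∈ 𝓑, ∀ α₁ ∈ B₁, ∀ α₂ ∈ B₂,
        ∃ g ∈ G, B₁.image ⇑g = B₂ ∧ g α₁ = α₂)
    (hpart : ∀ ω : Ω, ∃! Δ, Δ ∈ 𝓒 ∧ ω ∈ Δ)
    (hdcard : 𝓒.card = d) (hd2 : 2 ≤ d)
    (hccard : ∀ Δ ∈ 𝓒, Δ.card = c) (hc2 : 2 ≤ c)
    (hGC : ∀ g ∈ G, ∀ Δ ∈ 𝓒, Δ.image ⇑g ∈ 𝓒)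
    (hl2 : 2 ≤ ℓ)
    (hlcap : ∀ B ∈ 𝓑, ∀ Δ ∈ 𝓒, (B ∩ Δ).Nonempty → (B ∩ Δ).card = ℓ)
    (Δ : Finset Ω) (hΔ : Δ ∈ 𝓒)
    : ∃ θ : ℕ, 0 < θ ∧ θ ∣ lam ∧
      -- each nonempty trace B ∩ Δ arises from exactly θ blocks of 𝓑
      (∀ B ∈ 𝓑, (B ∩ Δ).Nonempty →
        (𝓑.filter (fun B' => B' ∩ Δ = B ∩ Δ)).card = θ) ∧
      -- each pair of distinct points of Δ lies in exactly λ/θ distinct traces B ∩ Δ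
      (∀ α ∈ Δ, ∀ β ∈ Δ, α ≠ β →
        ((𝓑.filter (fun B => α ∈ B ∧ β ∈ B)).image (fun B => B ∩ Δ)).card = lam / θ) := by
  exact stmt_14_general (isFlagTransitive_subgroup_perm hGB hflag)
    (isBlock_of_existsUnique_mem hΔ (fun g => hGC g g.2 Δ hΔ) fun α _ => hpart α)
    (Finset.one_lt_card_iff_nontrivial.mp (hc2.trans_eq (hccard Δ hΔ).symm))
    fun α _ β _ => hpairs α β
end

section
/- Assume Hypothesis (H). For B ∈ B set C(B) = {Δ ∈ C : B ∩ Δ ≠ ∅}. Then |C(B)| = k/ℓ for every block B, and for every pair of distinct classes Δ, Δ' ∈ C, the number of blocks B ∈ B with Δ ∈ C(B) and Δ' ∈ C(B) equals c²λ/ℓ²; that is, the quotient incidence structure D(C) on C, with blocks the sets C(B) for B ∈ B counted with multiplicity, is a 2-(d, k/ℓ, c²λ/ℓ²) design. -/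
/-!
Both claims are the same double count. If every point of `s` lies in exactly `r` members of a family
and every member that meets `s` does so in exactly `m` points, then the number of members meeting
`s`, times `m`, is `|s| r`. Taking for `s` a block and for the family the classes of the partition
gives `|C(B)| ℓ = k`. Taking for `s` the rectangle `Δ × Δ'` and for the family the squares `B × B`
gives `c²λ/ℓ²`, because `(B × B) ∩ (Δ × Δ') = (B ∩ Δ) × (B ∩ Δ')`.
-/

section DoubleCounting

open Finset

variable {α : Type*} [DecidableEq α]

theorem card_filter_inter_nonempty_mul_s15 {ι : Type*} {I : Finset ι} {A : ι → Finset α}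
    {s : Finset α} {r m : ℕ} (hr : ∀ a ∈ s, #{i ∈ I | a ∈ A i} = r)
    (hm : ∀ i ∈ I, (A i ∩ s).Nonempty → #(A i ∩ s) = m) :
    #{i ∈ I | (A i ∩ s).Nonempty} * m = #s * r := by
  refine (card_mul_eq_card_mul (fun a i ↦ a ∈ A i) (fun a ha ↦ ?_) fun i hi ↦ ?_).symm
  · have meets_of_mem : ∀ i, a ∈ A i → (A i ∩ s).Nonempty :=
      fun i hai ↦ ⟨a, mem_inter.2 ⟨hai, ha⟩⟩
    rw [bipartiteAbove, filter_filter, ← hr a ha]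
    exact congrArg card (filter_congr fun i _ ↦ and_iff_right_of_imp (meets_of_mem i))
  · obtain ⟨hiI, hmeets⟩ := mem_filter.1 hi
    rw [bipartiteBelow, filter_mem_eq_inter, inter_comm, hm i hiI hmeets]

theorem card_classes_meeting_mul {𝓒 : Finset (Finset α)} {B : Finset α} {ℓ : ℕ}
    (hpart : ∀ a ∈ B, ∃! Δ, Δ ∈ 𝓒 ∧ a ∈ Δ)
    (hℓcap : ∀ Δ ∈ 𝓒, (B ∩ Δ).Nonempty → #(B ∩ Δ) = ℓ) :
    #{Δ ∈ 𝓒 | (B ∩ Δ).Nonempty} * ℓ = #B := by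
  have one_class : ∀ a ∈ B, #{Δ ∈ 𝓒 | a ∈ Δ} = 1 := fun a ha ↦ by
    simpa only [card_eq_one_iff_existsUnique, mem_filter] using hpart a ha
  simpa only [inter_comm, id, mul_one] using
    card_filter_inter_nonempty_mul_s15 (A := id) one_class (by simpa only [inter_comm, id] using hℓcap)

theorem card_blocks_meeting_both_mul {𝓑 : Finset (Finset α)} {s t : Finset α} {lam m n : ℕ}
    (hpairs : ∀ a ∈ s, ∀ b ∈ t, #{B ∈ 𝓑 | a ∈ B ∧ b ∈ B} = lam)
    (hm : ∀ B ∈ 𝓑, (B ∩ s).Nonempty → #(B ∩ s) = m)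
    (hn : ∀ B ∈ 𝓑, (B ∩ t).Nonempty → #(B ∩ t) = n) :
    #{B ∈ 𝓑 | (B ∩ s).Nonempty ∧ (B ∩ t).Nonempty} * (m * n) = #s * #t * lam := by
  have squares_through : ∀ p ∈ s ×ˢ t, #{B ∈ 𝓑 | p ∈ B ×ˢ B} = lam := fun p hp ↦ by
    simpa only [mem_product] using
      hpairs p.1 (mem_product.1 hp).1 p.2 (mem_product.1 hp).2
  have card_square_inter : ∀ B ∈ 𝓑, ((B ×ˢ B) ∩ (s ×ˢ t)).Nonempty →
      #((B ×ˢ B) ∩ (s ×ˢ t)) = m * n := fun B hB hmeets ↦ by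
    rw [product_inter_product] at hmeets ⊢
    rw [card_product, hm B hB hmeets.fst, hn B hB hmeets.snd]
  simpa only [product_inter_product, nonempty_product, card_product] using
    card_filter_inter_nonempty_mul_s15 squares_through card_square_inter

theorem stmt_15_general {k lam c ℓ : ℕ} {𝓑 𝓒 : Finset (Finset α)}
    (hkcard : ∀ B ∈ 𝓑, #B = k)
    (hpairs : ∀ Δ ∈ 𝓒, ∀ Δ' ∈ 𝓒, Δ ≠ Δ' →
      ∀ a ∈ Δ, ∀ b ∈ Δ', #{B ∈ 𝓑 | a ∈ B ∧ b ∈ B} = lam)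
    (hpart : ∀ a : α, ∃! Δ, Δ ∈ 𝓒 ∧ a ∈ Δ)
    (hccard : ∀ Δ ∈ 𝓒, #Δ = c) (hℓ : 0 < ℓ)
    (hℓcap : ∀ B ∈ 𝓑, ∀ Δ ∈ 𝓒, (B ∩ Δ).Nonempty → #(B ∩ Δ) = ℓ) :
    (∀ B ∈ 𝓑, #{Δ ∈ 𝓒 | (B ∩ Δ).Nonempty} = k / ℓ) ∧
      ∀ Δ ∈ 𝓒, ∀ Δ' ∈ 𝓒, Δ ≠ Δ' →
        #{B ∈ 𝓑 | (B ∩ Δ).Nonempty ∧ (B ∩ Δ').Nonempty} * ℓ ^ 2 = c ^ 2 * lam := by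
  refine ⟨fun B hB ↦ ?_, fun Δ hΔ Δ' hΔ' hne ↦ ?_⟩
  · rw [← hkcard B hB, ← card_classes_meeting_mul (fun a _ ↦ hpart a) (hℓcap B hB),
      Nat.mul_div_cancel _ hℓ]
  · simpa only [hccard Δ hΔ, hccard Δ' hΔ', ← sq] using
      card_blocks_meeting_both_mul (hpairs Δ hΔ Δ' hΔ' hne)
        (fun B hB ↦ hℓcap B hB Δ hΔ) (fun B hB ↦ hℓcap B hB Δ' hΔ')

end DoubleCounting

theorem stmt_15
    {Ω : Type*} [Fintype Ω] [DecidableEq Ω]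
    (v k lam c d ℓ : ℕ)
    (𝓑 𝓒 : Finset (Finset Ω))
    (G : Subgroup (Equiv.Perm Ω))
    (hv : Fintype.card Ω = v)
    (hlam1 : 1 ≤ lam)
    (hkcard : ∀ B ∈ 𝓑, B.card = k)
    (hpairs : ∀ α β : Ω, α ≠ β → (𝓑.filter (fun B => α ∈ B ∧ β ∈ B)).card = lam)
    (hk2 : 2 < k) (hkv : k < v)
    (hGB : ∀ g ∈ G, ∀ B ∈ 𝓑, B.image ⇑g ∈ 𝓑)
    (hflag : ∀ B₁ ∈ 𝓑, ∀ B₂ ∈ 𝓑, ∀ α₁ ∈ B₁, ∀ α₂ ∈ B₂,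
        ∃ g ∈ G, B₁.image ⇑g = B₂ ∧ g α₁ = α₂)
    (hpart : ∀ ω : Ω, ∃! Δ, Δ ∈ 𝓒 ∧ ω ∈ Δ)
    (hdcard : 𝓒.card = d) (hd2 : 2 ≤ d)
    (hccard : ∀ Δ ∈ 𝓒, Δ.card = c) (hc2 : 2 ≤ c)
    (hGC : ∀ g ∈ G, ∀ Δ ∈ 𝓒, Δ.image ⇑g ∈ 𝓒)
    (hl2 : 2 ≤ ℓ)
    (hlcap : ∀ B ∈ 𝓑, ∀ Δ ∈ 𝓒, (B ∩ Δ).Nonempty → (B ∩ Δ).card = ℓ)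
    : -- every block meets exactly k/ℓ classes
      (∀ B ∈ 𝓑, (𝓒.filter (fun Δ => (B ∩ Δ).Nonempty)).card = k / ℓ) ∧
      -- every pair of distinct classes is incident with exactly c²λ/ℓ² blocks
      (∀ Δ ∈ 𝓒, ∀ Δ' ∈ 𝓒, Δ ≠ Δ' →
        (𝓑.filter (fun B => (B ∩ Δ).Nonempty ∧ (B ∩ Δ').Nonempty)).card * ℓ ^ 2 = c ^ 2 * lam) := by
  refine stmt_15_general hkcard (fun Δ hΔ Δ' hΔ' hne α hα β hβ ↦ hpairs α β ?_) hpart hccard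
    (Nat.zero_lt_of_lt hl2) hlcap
  exact fun hαβ ↦ hne ((hpart α).unique ⟨hΔ, hα⟩ ⟨hΔ', hαβ ▸ hβ⟩)
end

section
/- Assume Hypothesis (H) with λ ∈ {3,4} and v ≥ 100. Then the permutation group D = G^C induced by G on the class partition C is primitive on C, and for each class Δ ∈ C the permutation group L = (G_Δ)^Δ induced on Δ by its setwise stabilizer is primitive on Δ. -/
/-!
Let `T` be a block of imprimitivity through a point `α`. By flag-transitivity every block `B` of
the design through `α` meets `T` in the same number of points, so counting pairs gives
`r (|B ∩ T| - 1) = lam (|T| - 1)`, where `r` is the number of blocks on a point. For a chain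
`T ⊂ U ⊂ Ω` of nontrivial blocks of imprimitivity these equations, together with Fisher's
inequality `k ≤ r`, force `lam ≥ 7`; the value `7` satisfies them, with `|T| = 3`, `|U| = 9` and
`|Ω| = 27`. Such a chain is what imprimitivity produces: on the classes, from a class and a union
of classes; on a class, from a block of imprimitivity of its stabilizer and the class itself.
-/

open Finset MulAction
open scoped Pointwise Matrix

/-- A family of blocks is pairwise balanced of index `lam` if any two distinct points lie together
in exactly `lam` of its blocks. Block sizes are not constrained. -/
def PairwiseBalanced {Ω : Type*} [DecidableEq Ω] (𝓑 : Finset (Finset Ω)) (lam : ℕ) : Prop :=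
  ∀ α β : Ω, α ≠ β → #{B ∈ 𝓑 | α ∈ B ∧ β ∈ B} = lam

/-- Flag-transitivity: `G` is transitive on the pairs `(α, B)` with `α ∈ B ∈ 𝓑`. -/
def FlagTransitive (G : Type*) {Ω : Type*} [DecidableEq Ω] [Group G] [MulAction G Ω]
    (𝓑 : Finset (Finset Ω)) : Prop :=
  ∀ B₁ ∈ 𝓑, ∀ B₂ ∈ 𝓑, ∀ α₁ ∈ B₁, ∀ α₂ ∈ B₂, ∃ g : G, g • B₁ = B₂ ∧ g • α₁ = α₂

/-- A partition of the points, given as the finset of its classes, that `G` leaves invariant. -/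
structure IsInvariantPartition (G : Type*) {Ω : Type*} [DecidableEq Ω] [Group G] [MulAction G Ω]
    (𝓒 : Finset (Finset Ω)) : Prop where
  existsUnique_mem : ∀ ω : Ω, ∃! Δ, Δ ∈ 𝓒 ∧ ω ∈ Δ
  smul_mem : ∀ g : G, ∀ Δ ∈ 𝓒, g • Δ ∈ 𝓒

namespace PairwiseBalanced

variable {Ω : Type*} [DecidableEq Ω] {𝓑 : Finset (Finset Ω)} {k lam : ℕ}

lemma exists_mem_mem (h𝓑 : PairwiseBalanced 𝓑 lam) (hlam : 0 < lam) {α β : Ω} (hαβ : α ≠ β) :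
    ∃ B ∈ 𝓑, α ∈ B ∧ β ∈ B :=
  filter_nonempty_iff.1 <| card_pos.1 <| (h𝓑 α β hαβ).symm ▸ hlam

lemma exists_mem [Nontrivial Ω] (h𝓑 : PairwiseBalanced 𝓑 lam) (hlam : 0 < lam) (α : Ω) :
    ∃ B ∈ 𝓑, α ∈ B := by
  obtain ⟨β, hβ⟩ := exists_ne α
  obtain ⟨B, hB, hα, -⟩ := h𝓑.exists_mem_mem hlam hβ.symm
  exact ⟨B, hB, hα⟩

lemma one_lt_block_size [Nontrivial Ω] (h𝓑 : PairwiseBalanced 𝓑 lam) (hlam : 0 < lam)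
    (hk : ∀ B ∈ 𝓑, #B = k) : 1 < k := by
  obtain ⟨α, β, hαβ⟩ := exists_pair_ne Ω
  obtain ⟨B, hB, hα, hβ⟩ := h𝓑.exists_mem_mem hlam hαβ
  exact hk B hB ▸ one_lt_card.2 ⟨α, hα, β, hβ, hαβ⟩

lemma card_filter_mem_mul_sub_one (h𝓑 : PairwiseBalanced 𝓑 lam) {T : Finset Ω} {α : Ω}
    (hα : α ∈ T) {l : ℕ} (hl : ∀ B ∈ 𝓑, α ∈ B → #(B ∩ T) = l) :
    #{B ∈ 𝓑 | α ∈ B} * (l - 1) = lam * (#T - 1) := by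
  have hinter : ∀ B ∈ 𝓑.filter (α ∈ ·), #(T.erase α ∩ B) = l - 1 := fun B hB ↦ by
    obtain ⟨hB, hαB⟩ := mem_filter.1 hB
    rw [erase_inter, card_erase_of_mem (mem_inter.2 ⟨hα, hαB⟩), inter_comm, hl B hB hαB]
  have hpairs : ∀ β ∈ T.erase α, #{B ∈ 𝓑.filter (α ∈ ·) | β ∈ B} = lam := fun β hβ ↦ by
    rw [filter_filter, h𝓑 α β (ne_of_mem_erase hβ).symm]
  rw [← sum_const_nat hinter, sum_card_inter hpairs, card_erase_of_mem hα, mul_comm]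

variable [Fintype Ω]

open Matrix in
/-- The Gram matrix of the incidence vectors of the points is a positive diagonal matrix plus a
nonnegative multiple of the all-ones matrix, hence invertible. -/
theorem card_points_le_card_blocks (h𝓑 : PairwiseBalanced 𝓑 lam)
    (hlt : ∀ α : Ω, lam < #{B ∈ 𝓑 | α ∈ B}) : Fintype.card Ω ≤ #𝓑 := by
  let N : Matrix Ω 𝓑 ℝ := of fun α B ↦ if α ∈ B.1 then 1 else 0
  have hgram : N * Nᵀ = diagonal (fun α ↦ (#{B ∈ 𝓑 | α ∈ B} : ℝ) - lam)
      + (lam : ℝ) • vecMulVec (1 : Ω → ℝ) (star 1) := by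
    ext α β
    have hentry : (N * Nᵀ) α β = #{B ∈ 𝓑 | α ∈ B ∧ β ∈ B} := by
      simp only [N, mul_apply, transpose_apply, of_apply, ← ite_and, mul_ite, mul_one, mul_zero,
        and_comm]
      rw [sum_coe_sort 𝓑 fun B ↦ if α ∈ B ∧ β ∈ B then (1 : ℝ) else 0, sum_boole]
    obtain rfl | hαβ := eq_or_ne α β
    · simp [hentry]
    · simp [hentry, hαβ, h𝓑 α β hαβ]
  have hpos : (N * Nᵀ).PosDef := hgram ▸
    (PosDef.diagonal fun α ↦ sub_pos.2 (Nat.cast_lt.2 (hlt α))).add_posSemidef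
      ((posSemidef_vecMulVec_self_star 1).smul lam.cast_nonneg)
  calc Fintype.card Ω = (N * Nᵀ).rank := (rank_of_isUnit _ hpos.isUnit).symm
    _ ≤ N.rank := rank_mul_le_left _ _
    _ ≤ Fintype.card 𝓑 := rank_le_card_width _
    _ = #𝓑 := Fintype.card_coe 𝓑

lemma card_filter_mem_mul_block_size_sub_one (h𝓑 : PairwiseBalanced 𝓑 lam)
    (hk : ∀ B ∈ 𝓑, #B = k) (α : Ω) :
    #{B ∈ 𝓑 | α ∈ B} * (k - 1) = lam * (Fintype.card Ω - 1) :=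
  h𝓑.card_filter_mem_mul_sub_one (mem_univ α) fun B hB _ ↦ by rw [inter_univ, hk B hB]

theorem block_size_le_card_filter_mem [Nontrivial Ω] (h𝓑 : PairwiseBalanced 𝓑 lam)
    (hlam : 0 < lam) (hk : ∀ B ∈ 𝓑, #B = k) (hkv : k < Fintype.card Ω) (α : Ω) :
    k ≤ #{B ∈ 𝓑 | α ∈ B} := by
  have hk1 : 1 < k := h𝓑.one_lt_block_size hlam hk
  have hcount := h𝓑.card_filter_mem_mul_block_size_sub_one hk
  have hconst : ∀ β : Ω, #{B ∈ 𝓑 | β ∈ B} = #{B ∈ 𝓑 | α ∈ B} := fun β ↦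
    Nat.eq_of_mul_eq_mul_right (Nat.sub_pos_of_lt hk1) ((hcount β).trans (hcount α).symm)
  have hlt : ∀ β : Ω, lam < #{B ∈ 𝓑 | β ∈ B} := fun β ↦ by
    refine lt_of_mul_lt_mul_right ?_ (k - 1).zero_le
    rw [hcount β]
    exact Nat.mul_lt_mul_of_pos_left (by lia) hlam
  refine Nat.le_of_mul_le_mul_left ?_ (Nat.zero_lt_of_lt hkv)
  calc Fintype.card Ω * k ≤ #𝓑 * k := by gcongr; exact h𝓑.card_points_le_card_blocks hlt
    _ = Fintype.card Ω * #{B ∈ 𝓑 | α ∈ B} := by rw [← sum_const_nat hk, sum_card hconst]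

end PairwiseBalanced

lemma seven_le_of_add_mul_lt {lam r a : ℤ} (hlam : 0 < lam) (hr : 0 < r)
    (hra : r ≤ lam * (a - 2)) (hlt : (lam + r) * a < lam * r) : 7 ≤ lam := by
  have ha : 0 < a - 2 := pos_of_mul_pos_right (hr.trans_le hra) hlam.le
  have hlt' : lam * a < r * (lam - a) := by linarith
  have hla : 0 < lam - a :=
    pos_of_mul_pos_right ((mul_pos hlam (by linarith)).trans hlt') hr.le
  have hlt'' : a < (a - 2) * (lam - a) := by
    refine lt_of_mul_lt_mul_left ?_ hlam.le
    calc lam * a < r * (lam - a) := hlt'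
      _ ≤ lam * (a - 2) * (lam - a) := mul_le_mul_of_nonneg_right hra hla.le
      _ = lam * ((a - 2) * (lam - a)) := mul_assoc _ _ _
  by_contra! hlam7
  have hquad : (a - 3) * (a - 4) < 0 := by
    have : (a - 2) * (lam - a) ≤ (a - 2) * (6 - a) := by gcongr; lia
    linarith
  obtain h3 | h4 : a ≤ 3 ∨ 4 ≤ a := by lia
  · exact hquad.not_ge (mul_nonneg_of_nonpos_of_nonpos (by linarith) (by linarith))
  · exact hquad.not_ge (mul_nonneg (by linarith) (by linarith))

/-- The numbers `c`, `c * m` and `c * m * d` are the sizes of `T ⊂ U ⊂ Ω`, and `a + 1`, `a' + 1` and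
`b + 1` those of their intersections with a block. The key point is that `c` divides `a' - a`. -/
lemma seven_le_of_nested_parameters {r lam a a' b c m d : ℕ}
    (hT : r * a = lam * (c - 1)) (hU : r * a' = lam * (c * m - 1))
    (hΩ : r * b = lam * (c * m * d - 1)) (hbr : b < r) (hlam : 0 < lam)
    (hc : 1 < c) (hm : 1 < m) (hd : 1 < d) : 7 ≤ lam := by
  have hcm : c < c * m := lt_mul_of_one_lt_right (by lia) hm
  have hcmd : c * m < c * m * d := lt_mul_of_one_lt_right (by lia) hd
  zify [hc.le, (hc.trans hcm).le, (hc.trans (hcm.trans hcmd)).le] at *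
  have hr : (0 : ℤ) < r := by lia
  obtain ⟨x, hx⟩ : ∃ x : ℤ, b = d * a' + x := ⟨b - d * a', by ring⟩
  have hrx : r * x = lam * (d - 1) := by linear_combination hΩ - d * hU - r * hx
  have ha : (0 : ℤ) < a :=
    pos_of_mul_pos_right (hT ▸ mul_pos hlam (sub_pos.2 hc)) hr.le
  have hx0 : 0 < x := pos_of_mul_pos_right (hrx ▸ mul_pos hlam (sub_pos.2 hd)) hr.le
  have haa' : (a : ℤ) < a' := by
    refine lt_of_mul_lt_mul_left ?_ hr.le
    rw [hT, hU]
    gcongr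
  have hdvd : (c : ℤ) ∣ a' - a := by
    refine ⟨a' - a * m, mul_left_cancel₀ hr.ne' ?_⟩
    linear_combination (c * m - 1) * hT - (c - 1) * hU
  have hca : (c : ℤ) ≤ a' - a := Int.le_of_dvd (sub_pos.2 haa') hdvd
  have hra : (r : ℤ) ≤ lam * (a' - 2) := calc
    (r : ℤ) ≤ r * a := le_mul_of_one_le_right hr.le ha
    _ = lam * (c - 1) := hT
    _ ≤ lam * (a' - 2) := mul_le_mul_of_nonneg_left (by lia) hlam.le
  have hrd : (r : ℤ) ≤ lam * (d - 1) := hrx ▸ le_mul_of_one_le_right hr.le hx0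
  have hra' : (lam + r : ℤ) * a' < lam * r := calc
    (lam + r : ℤ) * a' ≤ lam * d * a' := by gcongr; linarith
    _ < lam * r := by rw [mul_assoc]; gcongr; lia
  exact_mod_cast seven_le_of_add_mul_lt hlam hr hra hra'

section GroupAction

variable {G Ω : Type*} [Group G] [MulAction G Ω]

lemma ncard_dvd_ncard_of_isBlock_of_subset [IsPretransitive G Ω] {S T : Set Ω}
    (hS : IsBlock G S) (hT : IsBlock G T) (hST : S ⊆ T) (hne : S.Nonempty) :
    S.ncard ∣ T.ncard := by
  obtain ⟨α, hα⟩ := hne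
  have hle : stabilizer G S ≤ stabilizer G T := fun g hg ↦
    hT.smul_eq_of_mem (hST hα) (hST (hg ▸ Set.smul_mem_smul_set hα))
  rw [hS.ncard_block_eq_relIndex hα, hT.ncard_block_eq_relIndex (hST hα),
    ← Subgroup.relIndex_mul_relIndex _ _ _ (hS.stabilizer_le hα) hle]
  exact dvd_mul_right _ _

lemma isBlock_of_isBlock_stabilizer_of_subset {S T : Set Ω} (hT : IsBlock G T)
    (hS : IsBlock (stabilizer G T) S) (hST : S ⊆ T) : IsBlock G S :=
  isBlock_iff_smul_eq_of_mem.2 fun g _ hα hgα ↦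
    hS.smul_eq_of_mem (g := ⟨g, hT.smul_eq_of_mem (hST hα) (hST hgα)⟩) hα hgα

variable [DecidableEq Ω]

lemma isBlock_coe_finset_iff {T : Finset Ω} :
    IsBlock G (T : Set Ω) ↔ ∀ g : G, g • T = T ∨ Disjoint (g • T) T := by
  simp only [isBlock_iff_smul_eq_or_disjoint, ← coe_smul_finset, coe_inj, disjoint_coe]

namespace FlagTransitive

variable {𝓑 : Finset (Finset Ω)}

lemma isPretransitive (hG : FlagTransitive G 𝓑) (hcover : ∀ α : Ω, ∃ B ∈ 𝓑, α ∈ B) :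
    IsPretransitive G Ω where
  exists_smul_eq α β := by
    obtain ⟨A, hA, hα⟩ := hcover α
    obtain ⟨B, hB, hβ⟩ := hcover β
    obtain ⟨g, -, hg⟩ := hG A hA B hB α hα β hβ
    exact ⟨g, hg⟩

lemma card_inter_eq (hG : FlagTransitive G 𝓑) {T : Finset Ω} (hT : IsBlock G (T : Set Ω))
    {α : Ω} (hα : α ∈ T) {A B : Finset Ω} (hA : A ∈ 𝓑) (hB : B ∈ 𝓑) (hαA : α ∈ A)
    (hαB : α ∈ B) : #(A ∩ T) = #(B ∩ T) := by
  obtain ⟨g, rfl, hgα⟩ := hG A hA B hB α hαA α hαB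
  have hgT : g • T = T := coe_injective <| by
    rw [coe_smul_finset, hT.smul_eq_of_mem hα (hgα.symm ▸ hα)]
  calc #(A ∩ T) = #(g • (A ∩ T)) := (card_smul_finset _ _).symm
    _ = #(g • A ∩ T) := by rw [smul_finset_inter, hgT]

theorem eq_or_eq_univ_of_isBlock [Fintype Ω] {k lam : ℕ} (hG : FlagTransitive G 𝓑)
    (h𝓑 : PairwiseBalanced 𝓑 lam) (hlam : 0 < lam) (hlam6 : lam ≤ 6) (hk : ∀ B ∈ 𝓑, #B = k)
    (hkv : k < Fintype.card Ω) {S T : Finset Ω} (hS : IsBlock G (S : Set Ω))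
    (hT : IsBlock G (T : Set Ω)) (hST : S ⊆ T) (hS1 : 1 < #S) : S = T ∨ T = univ := by
  obtain ⟨α, hα, β, -, hαβ⟩ := one_lt_card.1 hS1
  have : Nontrivial Ω := ⟨α, β, hαβ⟩
  have : IsPretransitive G Ω := hG.isPretransitive (h𝓑.exists_mem hlam)
  obtain ⟨B, hB, hαB⟩ := h𝓑.exists_mem hlam α
  have hcount : ∀ {U : Finset Ω}, IsBlock G (U : Set Ω) → α ∈ U →
      #{B ∈ 𝓑 | α ∈ B} * (#(B ∩ U) - 1) = lam * (#U - 1) := fun hU hαU ↦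
    h𝓑.card_filter_mem_mul_sub_one hαU fun _ hA hαA ↦ hG.card_inter_eq hU hαU hA hB hαA hαB
  have hdvd : ∀ {U V : Finset Ω}, IsBlock G (U : Set Ω) → IsBlock G (V : Set Ω) → U ⊆ V →
      α ∈ U → #U ∣ #V := fun hU hV hUV hαU ↦ by
    simpa only [Set.ncard_coe_finset] using
      ncard_dvd_ncard_of_isBlock_of_subset hU hV (coe_subset.2 hUV) ⟨α, hαU⟩
  have huniv : IsBlock G ((univ : Finset Ω) : Set Ω) := coe_univ (α := Ω) ▸ .univ
  obtain ⟨m, hm⟩ := hdvd hS hT hST hα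
  obtain ⟨d, hd⟩ := hdvd hT huniv (subset_univ T) (hST hα)
  by_contra! ⟨hne, hTne⟩
  have hmlt : 1 < m := by
    have := card_lt_card (hST.ssubset_of_ne hne)
    exact lt_of_mul_lt_mul_left (by lia) (#S).zero_le
  have hdlt : 1 < d := by
    have := card_lt_card ((subset_univ T).ssubset_of_ne hTne)
    exact lt_of_mul_lt_mul_left (by lia) (#T).zero_le
  have hkr := h𝓑.block_size_le_card_filter_mem hlam hk hkv α
  have hk1 := h𝓑.one_lt_block_size hlam hk
  have hlam7 := seven_le_of_nested_parameters (hcount hS hα) (hm ▸ hcount hT (hST hα))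
    (by rw [← hm, ← hd, card_univ]; exact h𝓑.card_filter_mem_mul_block_size_sub_one hk α)
    (by lia) hlam hS1 hmlt hdlt
  lia

end FlagTransitive

namespace IsInvariantPartition

variable {𝓒 S : Finset (Finset Ω)} {Δ Δ' : Finset Ω} {ω : Ω}

lemma eq_of_mem (h𝓒 : IsInvariantPartition G 𝓒) (hΔ : Δ ∈ 𝓒) (hΔ' : Δ' ∈ 𝓒) (hω : ω ∈ Δ)
    (hω' : ω ∈ Δ') : Δ = Δ' :=
  (h𝓒.existsUnique_mem ω).unique ⟨hΔ, hω⟩ ⟨hΔ', hω'⟩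

lemma smul_eq_of_mem (h𝓒 : IsInvariantPartition G 𝓒) (hΔ : Δ ∈ 𝓒) (hΔ' : Δ' ∈ 𝓒) {g : G}
    (hω : ω ∈ Δ) (hgω : g • ω ∈ Δ') : g • Δ = Δ' :=
  h𝓒.eq_of_mem (h𝓒.smul_mem g Δ hΔ) hΔ' (smul_mem_smul_finset hω) hgω

lemma isBlock (h𝓒 : IsInvariantPartition G 𝓒) (hΔ : Δ ∈ 𝓒) : IsBlock G (Δ : Set Ω) :=
  isBlock_iff_smul_eq_of_mem.2 fun g _ hω hgω ↦ by
    rw [← coe_smul_finset, h𝓒.smul_eq_of_mem hΔ hΔ hω hgω]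

lemma mem_biUnion_iff (h𝓒 : IsInvariantPartition G 𝓒) (hS : S ⊆ 𝓒) (hΔ : Δ ∈ 𝓒)
    (hω : ω ∈ Δ) : ω ∈ S.biUnion id ↔ Δ ∈ S := by
  refine ⟨fun h ↦ ?_, fun h ↦ mem_biUnion.2 ⟨Δ, h, hω⟩⟩
  obtain ⟨Δ', hΔ', hω'⟩ := mem_biUnion.1 h
  exact h𝓒.eq_of_mem hΔ (hS hΔ') hω hω' ▸ hΔ'

lemma biUnion_injOn (h𝓒 : IsInvariantPartition G 𝓒) (hne : ∀ Δ ∈ 𝓒, Δ.Nonempty) :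
    Set.InjOn (fun S : Finset (Finset Ω) ↦ S.biUnion id) {S | S ⊆ 𝓒} := by
  intro S hS S' hS' heq
  have hmem : ∀ Δ ∈ 𝓒, Δ ∈ S ↔ Δ ∈ S' := fun Δ hΔ ↦ by
    obtain ⟨ω, hω⟩ := hne Δ hΔ
    rw [← h𝓒.mem_biUnion_iff hS hΔ hω, ← h𝓒.mem_biUnion_iff hS' hΔ hω]
    exact Finset.ext_iff.1 heq ω
  exact Subset.antisymm (fun Δ hΔ ↦ (hmem Δ (hS hΔ)).1 hΔ) fun Δ hΔ ↦ (hmem Δ (hS' hΔ)).2 hΔ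

lemma biUnion_eq_univ [Fintype Ω] (h𝓒 : IsInvariantPartition G 𝓒) : 𝓒.biUnion id = univ :=
  eq_univ_of_forall fun ω ↦
    have ⟨Δ, ⟨hΔ, hω⟩, _⟩ := h𝓒.existsUnique_mem ω
    mem_biUnion.2 ⟨Δ, hΔ, hω⟩

lemma eq_singleton_of_biUnion_eq (h𝓒 : IsInvariantPartition G 𝓒) (hne : ∀ Δ ∈ 𝓒, Δ.Nonempty)
    (hS : S ⊆ 𝓒) (hΔ : Δ ∈ 𝓒) (h : S.biUnion id = Δ) : S = {Δ} :=
  h𝓒.biUnion_injOn hne hS (singleton_subset_iff.2 hΔ) (h.trans (singleton_biUnion (t := id)).symm)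

lemma eq_of_biUnion_eq_univ [Fintype Ω] (h𝓒 : IsInvariantPartition G 𝓒)
    (hne : ∀ Δ ∈ 𝓒, Δ.Nonempty) (hS : S ⊆ 𝓒) (h : S.biUnion id = univ) : S = 𝓒 :=
  h𝓒.biUnion_injOn hne hS Subset.rfl (h.trans h𝓒.biUnion_eq_univ.symm)

lemma ne_univ_of_mem [Fintype Ω] (h𝓒 : IsInvariantPartition G 𝓒) (hne : ∀ Δ ∈ 𝓒, Δ.Nonempty)
    (hd : 1 < #𝓒) (hΔ : Δ ∈ 𝓒) : Δ ≠ univ := fun hΔuniv ↦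
  have h𝓒Δ : 𝓒 = {Δ} :=
    h𝓒.eq_singleton_of_biUnion_eq hne Subset.rfl hΔ (h𝓒.biUnion_eq_univ.trans hΔuniv.symm)
  hd.ne' (h𝓒Δ ▸ card_singleton Δ)

lemma exists_smul_class_eq [IsPretransitive G Ω] (h𝓒 : IsInvariantPartition G 𝓒)
    (hne : ∀ Δ ∈ 𝓒, Δ.Nonempty) (hΔ : Δ ∈ 𝓒) (hΔ' : Δ' ∈ 𝓒) : ∃ g : G, g • Δ = Δ' := by
  obtain ⟨α, hα⟩ := hne Δ hΔ
  obtain ⟨β, hβ⟩ := hne Δ' hΔ'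
  obtain ⟨g, rfl⟩ := exists_smul_eq G α β
  exact ⟨g, h𝓒.smul_eq_of_mem hΔ hΔ' hα hβ⟩

lemma exists_mem_stabilizer_smul_eq [IsPretransitive G Ω] (h𝓒 : IsInvariantPartition G 𝓒)
    (hΔ : Δ ∈ 𝓒) {α β : Ω} (hα : α ∈ Δ) (hβ : β ∈ Δ) : ∃ g ∈ stabilizer G Δ, g • α = β := by
  obtain ⟨g, rfl⟩ := exists_smul_eq G α β
  exact ⟨g, h𝓒.smul_eq_of_mem hΔ hΔ hα hβ, rfl⟩

lemma isBlock_biUnion (h𝓒 : IsInvariantPartition G 𝓒) (hS : S ⊆ 𝓒)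
    (hSblock : IsBlock G (S : Set (Finset Ω))) :
    IsBlock G ((S.biUnion id : Finset Ω) : Set Ω) := by
  refine isBlock_iff_smul_eq_of_mem.2 fun g ω hω hgω ↦ ?_
  obtain ⟨Δ, hΔ, hωΔ⟩ := mem_biUnion.1 hω
  obtain ⟨Δ', hΔ', hgωΔ'⟩ := mem_biUnion.1 hgω
  have hgΔ : g • Δ = Δ' := h𝓒.smul_eq_of_mem (hS hΔ) (hS hΔ') hωΔ hgωΔ'
  have hgS : g • S = S := coe_injective <| by
    rw [coe_smul_finset, hSblock.smul_eq_of_mem hΔ (hgΔ ▸ hΔ')]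
  have hsmul : g • S.biUnion id = (g • S).biUnion id := by
    simp only [smul_finset_def, image_biUnion, biUnion_image, id]
  rw [← coe_smul_finset, hsmul, hgS]

end IsInvariantPartition

end GroupAction

theorem stmt_16_general {G Ω : Type*} [Group G] [Fintype Ω] [DecidableEq Ω] [MulAction G Ω]
    {𝓑 𝓒 : Finset (Finset Ω)} {k lam : ℕ} (h𝓑 : PairwiseBalanced 𝓑 lam) (hlam : 0 < lam)
    (hlam6 : lam ≤ 6) (hk : ∀ B ∈ 𝓑, #B = k) (hkv : k < Fintype.card Ω)
    (hG : FlagTransitive G 𝓑) (h𝓒 : IsInvariantPartition G 𝓒) (hd : 1 < #𝓒)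
    (hc : ∀ Δ ∈ 𝓒, 1 < #Δ) :
    ((∀ Δ ∈ 𝓒, ∀ Δ' ∈ 𝓒, ∃ g : G, g • Δ = Δ') ∧
      ∀ S ⊆ 𝓒, IsBlock G (S : Set (Finset Ω)) → #S ≤ 1 ∨ S = 𝓒) ∧
    ∀ Δ ∈ 𝓒, (∀ α ∈ Δ, ∀ β ∈ Δ, ∃ g ∈ stabilizer G Δ, g • α = β) ∧
      ∀ S ⊆ Δ, IsBlock (stabilizer G Δ) (S : Set Ω) → #S ≤ 1 ∨ S = Δ := by
  have hne : ∀ Δ ∈ 𝓒, Δ.Nonempty := fun Δ hΔ ↦ card_pos.1 (Nat.zero_lt_of_lt (hc Δ hΔ))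
  obtain ⟨Δ₀, hΔ₀⟩ := card_pos.1 (Nat.zero_lt_of_lt hd)
  obtain ⟨α₀, -, β₀, -, hαβ₀⟩ := one_lt_card.1 (hc Δ₀ hΔ₀)
  have : Nontrivial Ω := ⟨α₀, β₀, hαβ₀⟩
  have : IsPretransitive G Ω := hG.isPretransitive (h𝓑.exists_mem hlam)
  refine ⟨⟨fun Δ hΔ Δ' hΔ' ↦ h𝓒.exists_smul_class_eq hne hΔ hΔ', fun S hS hSblock ↦ ?_⟩,
    fun Δ hΔ ↦ ⟨fun α hα β hβ ↦ h𝓒.exists_mem_stabilizer_smul_eq hΔ hα hβ,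
      fun S hS hSblock ↦ or_iff_not_imp_left.2 fun hS1 ↦ ?_⟩⟩
  · obtain rfl | ⟨Δ, hΔ⟩ := S.eq_empty_or_nonempty
    · exact .inl (Nat.zero_le 1)
    refine (hG.eq_or_eq_univ_of_isBlock h𝓑 hlam hlam6 hk hkv (h𝓒.isBlock (hS hΔ))
      (h𝓒.isBlock_biUnion hS hSblock) (subset_biUnion_of_mem id hΔ) (hc Δ (hS hΔ))).imp
      (fun h ↦ ?_) (h𝓒.eq_of_biUnion_eq_univ hne hS)
    exact h𝓒.eq_singleton_of_biUnion_eq hne hS (hS hΔ) h.symm ▸ (card_singleton Δ).le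
  · have hSblock' : IsBlock G (S : Set Ω) := isBlock_of_isBlock_stabilizer_of_subset
      (h𝓒.isBlock hΔ) (by rwa [stabilizer_coe_finset]) (coe_subset.2 hS)
    exact (hG.eq_or_eq_univ_of_isBlock h𝓑 hlam hlam6 hk hkv hSblock' (h𝓒.isBlock hΔ) hS
      (not_le.1 hS1)).resolve_right (h𝓒.ne_univ_of_mem hne hd hΔ)

theorem stmt_16
    {Ω : Type*} [Fintype Ω] [DecidableEq Ω]
    (v k lam c d ℓ : ℕ)
    (𝓑 𝓒 : Finset (Finset Ω))
    (G : Subgroup (Equiv.Perm Ω))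
    (hv : Fintype.card Ω = v)
    (hlam1 : 1 ≤ lam)
    (hkcard : ∀ B ∈ 𝓑, B.card = k)
    (hpairs : ∀ α β : Ω, α ≠ β → (𝓑.filter (fun B => α ∈ B ∧ β ∈ B)).card = lam)
    (hk2 : 2 < k) (hkv : k < v)
    (hGB : ∀ g ∈ G, ∀ B ∈ 𝓑, B.image ⇑g ∈ 𝓑)
    (hflag : ∀ B₁ ∈ 𝓑, ∀ B₂ ∈ 𝓑, ∀ α₁ ∈ B₁, ∀ α₂ ∈ B₂,
        ∃ g ∈ G, B₁.image ⇑g = B₂ ∧ g α₁ = α₂)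
    (hpart : ∀ ω : Ω, ∃! Δ, Δ ∈ 𝓒 ∧ ω ∈ Δ)
    (hdcard : 𝓒.card = d) (hd2 : 2 ≤ d)
    (hccard : ∀ Δ ∈ 𝓒, Δ.card = c) (hc2 : 2 ≤ c)
    (hGC : ∀ g ∈ G, ∀ Δ ∈ 𝓒, Δ.image ⇑g ∈ 𝓒)
    (hl2 : 2 ≤ ℓ)
    (hlcap : ∀ B ∈ 𝓑, ∀ Δ ∈ 𝓒, (B ∩ Δ).Nonempty → (B ∩ Δ).card = ℓ)
    (hlam34 : lam = 3 ∨ lam = 4) (hv100 : 100 ≤ v)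
    : -- D = G^𝓒 is transitive and primitive on 𝓒
      ((∀ Δ ∈ 𝓒, ∀ Δ' ∈ 𝓒, ∃ g ∈ G, Δ.image ⇑g = Δ') ∧
        (∀ S : Finset (Finset Ω), S ⊆ 𝓒 →
          (∀ g ∈ G, S.image (fun Δ => Δ.image ⇑g) = S ∨
            Disjoint (S.image (fun Δ => Δ.image ⇑g)) S) →
          S.card ≤ 1 ∨ S = 𝓒)) ∧
      -- for every class Δ, L = (G_Δ)^Δ is transitive and primitive on Δ
      (∀ Δ ∈ 𝓒,
        (∀ α ∈ Δ, ∀ β ∈ Δ, ∃ g ∈ G, Δ.image ⇑g = Δ ∧ g α = β) ∧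
        (∀ S : Finset Ω, S ⊆ Δ →
          (∀ g ∈ G, Δ.image ⇑g = Δ → (S.image ⇑g = S ∨ Disjoint (S.image ⇑g) S)) →
          S.card ≤ 1 ∨ S = Δ)) := by
  have hG : FlagTransitive G 𝓑 := fun A hA B hB α hα β hβ ↦
    have ⟨g, hg, h⟩ := hflag A hA B hB α hα β hβ
    ⟨⟨g, hg⟩, h⟩
  have h := stmt_16_general hpairs hlam1 (by lia) hkcard (hv ▸ hkv) hG
    ⟨hpart, fun g ↦ hGC g g.2⟩ (hdcard ▸ hd2) fun Δ hΔ ↦ hccard Δ hΔ ▸ hc2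
  simp only [isBlock_coe_finset_iff, Subtype.forall, Subtype.exists, mem_stabilizer_iff,
    Subgroup.mk_smul, exists_prop] at h
  -- `g • s` and `s.image g` agree definitionally.
  exact h
end
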